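/- arXiv:1803.01388 — 11 statements merged into one kernel-verified Lean document; each statement's English description precedes it below -/
import Mathlib

section
/- Let K be a field of characteristic zero. Every artinian homogeneous ideal I in the polynomial ring K[x,y] has the strong Lefschetz property (and consequently also the weak Lefschetz property): there exists a linear form ℓ such that for all integers j and k the multiplication map ×ℓ^k : (K[x,y]/I)_j → (K[x,y]/I)_{j+k} has maximal rank. -/
open MvPolynomial

/-- The degree-`j` graded component of `S/I` (for `S = K[x_1,…,x_n]`), as a `K`-submodule of
the quotient: the image of the space of homogeneous polynomials of degree `j`.
For negative `j` it is the zero submodule. -/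
noncomputable def gradedPiece {K : Type*} [Field K] {n : ℕ}
    (I : Ideal (MvPolynomial (Fin n) K)) (j : ℤ) :
    Submodule K (MvPolynomial (Fin n) K ⧸ I) :=
  if 0 ≤ j then
    (homogeneousSubmodule (Fin n) K j.toNat).map (Ideal.Quotient.mkₐ K I).toLinearMap
  else ⊥

/-- A linear endomorphism `f` has maximal rank from `A` to `B` if it is injective on `A`
or maps `A` onto `B`. -/
def MaxRankOn {K M : Type*} [Field K] [AddCommGroup M] [Module K M]
    (f : M →ₗ[K] M) (A B : Submodule K M) : Prop :=
  (∀ x ∈ A, f x = 0 → x = 0) ∨ B ≤ A.map f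

namespace SLPaux
open Polynomial in
theorem inj_aux {K : Type*} [Field K] [CharZero K] (c : ℕ) : ∀ (W : Submodule K (Polynomial K)),
    FiniteDimensional K W → Module.finrank K W ≤ c →
    ∃ B : Finset K, ∀ a ∉ B, ∀ f ∈ W, (Polynomial.X - Polynomial.C a) ^ c ∣ f → f = 0 := by
  induction c with
  | zero =>
    intro W hW hc
    refine ⟨∅, fun a _ f hf _ => ?_⟩
    have : W = ⊥ := Submodule.finrank_eq_zero.mp (by omega)
    rw [this] at hf
    simpa using hf
  | succ c ih =>
    intro W hW hc
    by_cases hb : W = ⊥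
    · refine ⟨∅, fun a _ f hf _ => ?_⟩
      rw [hb] at hf
      simpa using hf
    obtain ⟨g, hg, hg0⟩ := (Submodule.ne_bot_iff W).mp hb
    let φ := (Polynomial.wronskianBilin K g).domRestrict W
    have hr : LinearMap.range φ = W.map (Polynomial.wronskianBilin K g) := by
      simp [φ, LinearMap.range_domRestrict]
    have hk : 0 < Module.finrank K (LinearMap.ker φ) := by
      have hgk : (⟨g, hg⟩ : W) ∈ LinearMap.ker φ := by
        simp [φ, Polynomial.wronskian, mul_comm]
      rw [Nat.pos_iff_ne_zero]
      intro h0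
      have hbot : LinearMap.ker φ = ⊥ := Submodule.finrank_eq_zero.mp h0
      rw [hbot, Submodule.mem_bot, Subtype.ext_iff] at hgk
      exact hg0 hgk
    have hrk := LinearMap.finrank_range_add_finrank_ker φ
    obtain ⟨B, hB⟩ := ih (LinearMap.range φ) inferInstance (by omega)
    classical
    refine ⟨B ∪ g.roots.toFinset, fun a ha f hf hdiv => ?_⟩
    simp only [Finset.mem_union, Multiset.mem_toFinset, not_or, Polynomial.mem_roots hg0] at ha
    obtain ⟨haB, hag⟩ := ha
    have hw : Polynomial.wronskian g f = 0 := by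
      apply hB a haB _ ⟨⟨f, hf⟩, rfl⟩
      change _ ∣ g * derivative f - derivative g * f
      apply dvd_sub
      · apply Dvd.dvd.mul_left
        simpa using Polynomial.pow_sub_one_dvd_derivative_of_pow_dvd hdiv
      · exact Dvd.dvd.mul_left ((pow_dvd_pow _ (Nat.le_succ c)).trans hdiv) _
    by_contra hf0
    have hfr : f.IsRoot a := by
      rw [← Polynomial.dvd_iff_isRoot]
      exact (dvd_pow_self _ (Nat.succ_ne_zero c)).trans hdiv
    have hpos := (Polynomial.rootMultiplicity_pos hf0).2 hfr
    have hder := Polynomial.derivative_rootMultiplicity_of_root hfr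
    have hd0 : derivative f ≠ 0 := by
      intro h
      have := Polynomial.derivative_eq_zero.1 h
      rw [Polynomial.eq_C_of_natDegree_eq_zero this] at hfr hf0
      simp at hfr hf0
      exact hf0 hfr
    have h1 : (Polynomial.X - Polynomial.C a) ^ (f.rootMultiplicity a) ∣ g * derivative f := by
      have : g * derivative f = derivative g * f := sub_eq_zero.mp hw
      rw [this]
      exact Dvd.dvd.mul_left (Polynomial.pow_rootMultiplicity_dvd f a) _
    have hcop : IsCoprime ((Polynomial.X - Polynomial.C a) ^ (f.rootMultiplicity a)) g := by
      apply IsCoprime.pow_left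
      rw [(Polynomial.irreducible_X_sub_C a).coprime_iff_not_dvd, Polynomial.dvd_iff_isRoot]
      exact hag
    have h2 := (Polynomial.le_rootMultiplicity_iff hd0).2 (hcop.dvd_of_dvd_mul_left h1)
    omega

open Polynomial in
theorem surj_aux {K : Type*} [Field K] (c : ℕ) (W : Submodule K (Polynomial K))
    (hW : FiniteDimensional K W) (hc : Module.finrank K W = c) (a : K)
    (h : ∀ f ∈ W, (Polynomial.X - Polynomial.C a) ^ c ∣ f → f = 0) (g : Polynomial K) :
    ∃ w ∈ W, (Polynomial.X - Polynomial.C a) ^ c ∣ g - w := by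
  set q : Polynomial K := (Polynomial.X - Polynomial.C a) ^ c with hq
  have hm : q.Monic := (Polynomial.monic_X_sub_C a).pow c
  have hdeg : q.degree = c := by simp [hq]
  have hmem : ∀ p : Polynomial K, p %ₘ q ∈ degreeLT K c := by
    intro p
    rw [Polynomial.mem_degreeLT, ← hdeg]
    exact Polynomial.degree_modByMonic_lt p hm
  let φ : W →ₗ[K] degreeLT K c :=
    ((Polynomial.modByMonicHom q).codRestrict (degreeLT K c) hmem).domRestrict W
  have hφ : ∀ w : W, ((φ w : degreeLT K c) : Polynomial K) = (w : Polynomial K) %ₘ q := fun w => rfl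
  have : FiniteDimensional K (degreeLT K c) := (Polynomial.degreeLTEquiv K c).symm.finiteDimensional
  have hfr : Module.finrank K W = Module.finrank K (degreeLT K c) := by
    rw [(Polynomial.degreeLTEquiv K c).finrank_eq, hc]; simp
  have hinj : Function.Injective φ := by
    rw [← LinearMap.ker_eq_bot, LinearMap.ker_eq_bot']
    intro w hw
    have := h w w.2 ((Polynomial.modByMonic_eq_zero_iff_dvd hm).1 (by rw [← hφ, hw]; rfl))
    exact Subtype.ext this
  obtain ⟨w, hw⟩ := (LinearMap.injective_iff_surjective_of_finrank_eq_finrank hfr).1 hinj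
    ⟨g %ₘ q, hmem g⟩
  refine ⟨w, w.2, ?_⟩
  rw [← Polynomial.modByMonic_eq_zero_iff_dvd hm, Polynomial.sub_modByMonic, ← hφ, hw]
  simp

/-- dehomogenization -/
noncomputable def deh (K : Type*) [Field K] : MvPolynomial (Fin 2) K →ₐ[K] Polynomial K :=
  aeval ![Polynomial.X, 1]

theorem deh_coeff {K : Type*} [Field K] {d : ℕ} {F : MvPolynomial (Fin 2) K}
    (hF : F.IsHomogeneous d) (s : Fin 2 →₀ ℕ) (hs : s.degree = d) :
    (deh K F).coeff (s 0) = F.coeff s := by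
  rw [deh, aeval_def, eval₂_eq', Polynomial.finsetSum_coeff]
  simp only [Fin.prod_univ_two, Matrix.cons_val_zero, Matrix.cons_val_one, one_pow, mul_one,
    Polynomial.algebraMap_eq, Polynomial.coeff_C_mul, Polynomial.coeff_X_pow]
  rw [Finset.sum_eq_single s]
  · simp
  · intro t ht hts
    rw [if_neg, mul_zero]
    intro h
    apply hts
    have ht' : t.degree = d := by
      by_contra hne
      exact (mem_support_iff.1 ht) (hF.coeff_eq_zero hne)
    rw [Finsupp.degree_eq_sum, Fin.sum_univ_two] at hs ht'
    ext i
    fin_cases i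
    · exact h.symm
    · simp; omega
  · intro h
    simpa using h

theorem deh_inj {K : Type*} [Field K] {d : ℕ} {F : MvPolynomial (Fin 2) K}
    (hF : F.IsHomogeneous d) (h : deh K F = 0) : F = 0 := by
  ext s
  by_cases hs : s.degree = d
  · rw [← deh_coeff hF s hs, h]; simp
  · rw [hF.coeff_eq_zero hs]; simp

theorem deh_natDegree {K : Type*} [Field K] {d : ℕ} {F : MvPolynomial (Fin 2) K}
    (hF : F.IsHomogeneous d) : (deh K F).natDegree ≤ d := by
  rw [deh, aeval_def, eval₂_eq']
  apply Polynomial.natDegree_sum_le_of_forall_le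
  intro t ht
  have ht' : t.degree = d := by
    by_contra hne
    exact (mem_support_iff.1 ht) (hF.coeff_eq_zero hne)
  rw [Finsupp.degree_eq_sum, Fin.sum_univ_two] at ht'
  simp only [Fin.prod_univ_two, Matrix.cons_val_zero, Matrix.cons_val_one, one_pow, mul_one,
    Polynomial.algebraMap_eq]
  refine (Polynomial.natDegree_C_mul_X_pow_le _ _).trans (by omega)

theorem deh_surj {K : Type*} [Field K] {d : ℕ} {p : Polynomial K} (hp : p.natDegree ≤ d) :
    ∃ F : MvPolynomial (Fin 2) K, F.IsHomogeneous d ∧ deh K F = p := by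
  refine ⟨∑ i ∈ Finset.range (d + 1), C (p.coeff i) * (X 0 ^ i * X 1 ^ (d - i)), ?_, ?_⟩
  · apply IsHomogeneous.sum
    intro i hi
    apply IsHomogeneous.C_mul
    have := (isHomogeneous_X_pow (R := K) (0 : Fin 2) i).mul (isHomogeneous_X_pow (1 : Fin 2) (d - i))
    have e : i + (d - i) = d := by simp at hi; omega
    rwa [e] at this
  · rw [map_sum]
    conv_rhs => rw [p.as_sum_range' (d + 1) (by omega)]
    apply Finset.sum_congr rfl
    intro i _
    simp [deh, Polynomial.C_mul_X_pow_eq_monomial]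

section Graded
attribute [local instance] MvPolynomial.gradedAlgebra

theorem X_pow_mem {K : Type*} [Field K] 
    (I : Ideal (MvPolynomial (Fin 2) K))
    (hart : Module.Finite K (MvPolynomial (Fin 2) K ⧸ I))
    (hI : I.IsHomogeneous (homogeneousSubmodule (Fin 2) K)) (i : Fin 2) :
    ∃ n : ℕ, (X i : MvPolynomial (Fin 2) K) ^ n ∈ I := by
  obtain ⟨p, hp, h0⟩ := Algebra.IsIntegral.isIntegral (R := K) (Ideal.Quotient.mk I (X i))
  refine ⟨p.natDegree, ?_⟩
  have h1 : Polynomial.aeval (X i : MvPolynomial (Fin 2) K) p ∈ I := by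
    rw [← Ideal.Quotient.eq_zero_iff_mem]
    rw [← Polynomial.aeval_def] at h0
    rw [← h0]
    exact (Polynomial.aeval_algHom_apply (Ideal.Quotient.mkₐ K I) (X i) p).symm
  have h2 := homogeneousComponent_mem_of_mem hI h1 (n := p.natDegree)
  convert h2 using 1
  rw [Polynomial.aeval_eq_sum_range, map_sum, Finset.sum_eq_single p.natDegree]
  · rw [map_smul, homogeneousComponent_eq_self (isHomogeneous_X_pow i _)]
    simp [hp]
  · intro b _ hb
    rw [map_smul, homogeneousComponent_of_mem (isHomogeneous_X_pow i b), if_neg (by tauto)]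
    simp
  · simp

theorem big_mem {K : Type*} [Field K] 
    (I : Ideal (MvPolynomial (Fin 2) K))
    (hart : Module.Finite K (MvPolynomial (Fin 2) K ⧸ I))
    (hI : I.IsHomogeneous (homogeneousSubmodule (Fin 2) K)) :
    ∃ N : ℕ, ∀ d ≥ N, ∀ F : MvPolynomial (Fin 2) K, F.IsHomogeneous d → F ∈ I := by
  obtain ⟨n, hn⟩ := X_pow_mem I hart hI 0
  obtain ⟨m, hm⟩ := X_pow_mem I hart hI 1
  refine ⟨n + m, fun d hd F hF => ?_⟩
  rw [F.as_sum]
  apply Ideal.sum_mem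
  intro t ht
  have ht' : t.degree = d := by
    by_contra hne
    exact (mem_support_iff.1 ht) (hF.coeff_eq_zero hne)
  rw [Finsupp.degree_eq_sum, Fin.sum_univ_two] at ht'
  rw [monomial_eq, Finsupp.prod_fintype _ _ (by simp), Fin.prod_univ_two]
  apply Ideal.mul_mem_left
  by_cases h : n ≤ t 0
  · exact Ideal.mul_mem_right _ _ (Ideal.mem_of_dvd I (pow_dvd_pow _ h) hn)
  · exact Ideal.mul_mem_left _ _ (Ideal.mem_of_dvd I (pow_dvd_pow _ (by omega)) hm)

theorem big_mem' {K : Type*} [Field K]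
    (I : Ideal (MvPolynomial (Fin 2) K))
    (hart : Module.Finite K (MvPolynomial (Fin 2) K ⧸ I))
    (hhom : ∃ G : Set (MvPolynomial (Fin 2) K),
      (∀ g ∈ G, ∃ e : ℕ, g.IsHomogeneous e) ∧ I = Ideal.span G) :
    ∃ N : ℕ, ∀ d ≥ N, ∀ F : MvPolynomial (Fin 2) K, F.IsHomogeneous d → F ∈ I := by
  have hI : I.IsHomogeneous (homogeneousSubmodule (Fin 2) K) := by
    obtain ⟨G, hG, rfl⟩ := hhom
    exact Ideal.homogeneous_span _ _ (fun x hx => hG x hx)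
  exact big_mem I hart hI
end Graded

end SLPaux

/-- Every artinian homogeneous ideal in `K[x,y]`, `K` a field of
characteristic zero, has the strong Lefschetz property. -/
theorem every_artinian_ideal_in_two_variables_has_SLP
    (K : Type*) [Field K] [CharZero K]
    (I : Ideal (MvPolynomial (Fin 2) K))
    (hart : Module.Finite K (MvPolynomial (Fin 2) K ⧸ I))
    (hhom : ∃ G : Set (MvPolynomial (Fin 2) K),
      (∀ g ∈ G, ∃ e : ℕ, g.IsHomogeneous e) ∧ I = Ideal.span G) :
    ∃ ℓ : MvPolynomial (Fin 2) K, ℓ.IsHomogeneous 1 ∧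
      ∀ (j : ℤ) (k : ℕ),
        MaxRankOn (LinearMap.mulLeft K ((Ideal.Quotient.mk I ℓ) ^ k))
          (gradedPiece I j) (gradedPiece I (j + k)) := by
  obtain ⟨N, hN⟩ := SLPaux.big_mem' I hart hhom
  let W : ℕ → Submodule K (Polynomial K) := fun d =>
    (homogeneousSubmodule (Fin 2) K d ⊓ I.restrictScalars K).map (SLPaux.deh K).toLinearMap
  have hWfd : ∀ d, FiniteDimensional K (W d) := by
    intro d
    have : W d ≤ Polynomial.degreeLT K (d + 1) := by
      rintro _ ⟨F, hF, rfl⟩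
      rw [Polynomial.mem_degreeLT]
      refine lt_of_le_of_lt Polynomial.degree_le_natDegree ?_
      have := SLPaux.deh_natDegree (d := d) (F := F) hF.1
      exact_mod_cast Nat.lt_succ_of_le this
    have h2 : FiniteDimensional K (Polynomial.degreeLT K (d + 1)) :=
      (Polynomial.degreeLTEquiv K (d + 1)).symm.finiteDimensional
    exact Submodule.finiteDimensional_of_le this
  choose B hB using fun d => SLPaux.inj_aux (Module.finrank K (W d)) (W d) (hWfd d) le_rfl
  classical
  obtain ⟨a, ha⟩ := Infinite.exists_notMem_finset ((Finset.range N).biUnion B)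
  have ha' : ∀ d < N, a ∉ B d := by
    intro d hd h
    exact ha (Finset.mem_biUnion.2 ⟨d, Finset.mem_range.2 hd, h⟩)
  have hl : (X 0 - C a * X 1 : MvPolynomial (Fin 2) K).IsHomogeneous 1 :=
    (isHomogeneous_X K 0).sub (isHomogeneous_C_mul_X a 1)
  have hdl : SLPaux.deh K (X 0 - C a * X 1) = Polynomial.X - Polynomial.C a := by
    simp [SLPaux.deh]
  refine ⟨X 0 - C a * X 1, hl, ?_⟩
  generalize (X 0 - C a * X 1 : MvPolynomial (Fin 2) K) = ℓ at hl hdl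
  intro j k
  by_cases hj : 0 ≤ j
  swap
  · left
    intro x hx _
    rw [gradedPiece, if_neg hj] at hx
    simpa using hx
  obtain ⟨n, rfl⟩ := Int.eq_ofNat_of_zero_le hj
  have hg1 : gradedPiece I (n : ℤ) =
      (homogeneousSubmodule (Fin 2) K n).map (Ideal.Quotient.mkₐ K I).toLinearMap := by
    rw [gradedPiece, if_pos hj, Int.toNat_natCast]
  have hg2 : gradedPiece I ((n : ℤ) + k) =
      (homogeneousSubmodule (Fin 2) K (n + k)).map (Ideal.Quotient.mkₐ K I).toLinearMap := by
    rw [gradedPiece, if_pos (by omega)]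
    congr 2
  rw [hg1, hg2]
  have hlk : (ℓ ^ k).IsHomogeneous k := by simpa using hl.pow k
  by_cases hd : N ≤ n + k
  · right
    rintro _ ⟨F, hF, rfl⟩
    have : (Ideal.Quotient.mkₐ K I).toLinearMap F = 0 :=
      Ideal.Quotient.eq_zero_iff_mem.2 (hN _ hd F hF)
    rw [this]
    exact Submodule.zero_mem _
  have hinj := hB (n + k) a (ha' _ (by omega))
  by_cases hk : Module.finrank K (W (n + k)) ≤ k
  · left
    rintro _ ⟨F, hF, rfl⟩ h0
    have hF' : F.IsHomogeneous n := hF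
    have hmem : ℓ ^ k * F ∈ I := by
      rw [← Ideal.Quotient.eq_zero_iff_mem, map_mul, map_pow]
      exact h0
    have hh : (ℓ ^ k * F).IsHomogeneous (n + k) := by
      rw [add_comm]; exact hlk.mul hF'
    have h1 := hinj (SLPaux.deh K (ℓ ^ k * F)) ⟨_, ⟨hh, hmem⟩, rfl⟩ (by
      rw [map_mul, map_pow, hdl]
      exact Dvd.dvd.mul_right (pow_dvd_pow _ hk) _)
    rw [map_mul, map_pow, hdl] at h1
    have h2 := (mul_eq_zero.1 h1).resolve_left
      (pow_ne_zero _ (Polynomial.X_sub_C_ne_zero a))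
    rw [SLPaux.deh_inj hF' h2, map_zero]
  · right
    rintro _ ⟨G, hG, rfl⟩
    have hG' : G.IsHomogeneous (n + k) := hG
    obtain ⟨_, ⟨H, ⟨hH, hHI⟩, rfl⟩, hdvd⟩ :=
      SLPaux.surj_aux _ (W (n + k)) (hWfd _) rfl a hinj (SLPaux.deh K G)
    have hH' : H.IsHomogeneous (n + k) := hH
    have hGH := hG'.sub hH'
    obtain ⟨q, hq⟩ := (pow_dvd_pow _ (not_le.1 hk).le).trans hdvd
    have hq' : SLPaux.deh K (G - H) = (Polynomial.X - Polynomial.C a) ^ k * q := by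
      rw [map_sub]; exact hq
    have hqd : q.natDegree ≤ n := by
      by_cases hq0 : q = 0
      · simp [hq0]
      have h3 := SLPaux.deh_natDegree hGH
      rw [hq', ((Polynomial.monic_X_sub_C a).pow k).natDegree_mul' hq0,
        Polynomial.natDegree_pow, Polynomial.natDegree_X_sub_C] at h3
      omega
    obtain ⟨F, hF, hFq⟩ := SLPaux.deh_surj hqd
    have hh : (ℓ ^ k * F).IsHomogeneous (n + k) := by
      rw [add_comm]; exact hlk.mul hF
    have heq : G - H - ℓ ^ k * F = 0 := by
      apply SLPaux.deh_inj (hGH.sub hh)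
      rw [map_sub, hq', map_mul, map_pow, hdl, hFq, sub_self]
    refine ⟨_, ⟨F, hF, rfl⟩, ?_⟩
    change Ideal.Quotient.mk I ℓ ^ k * Ideal.Quotient.mk I F = Ideal.Quotient.mk I G
    rw [← map_pow, ← map_mul]
    symm
    rw [Ideal.Quotient.eq]
    have : G - ℓ ^ k * F = H := by linear_combination heq
    rw [this]
    exact hHI
end

section
/- Let I ⊂ S = K[x_1,…,x_n] be an artinian monomial ideal over a field K of characteristic zero. Then S/I has the weak Lefschetz property if and only if x_1 + x_2 + ⋯ + x_n is a Lefschetz element for S/I, i.e. the multiplication map ×(x_1+⋯+x_n) : (S/I)_j → (S/I)_{j+1} has maximal rank for every integer j. -/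
open MvPolynomial

lemma exists_bad_set {K V : Type*} [Field K] [AddCommGroup V] [Module K V] [FiniteDimensional K V]
    (N : V →ₗ[K] V) : ∃ s : Set K, s.Finite ∧ ∀ t ∉ s, Function.Injective
      (LinearMap.id + t • N : V →ₗ[K] V) := by
  refine ⟨(fun μ => -μ⁻¹) '' {μ | Module.End.HasEigenvalue N μ},
    (Module.End.finite_hasEigenvalue N).image _, ?_⟩
  intro t ht
  rw [injective_iff_map_eq_zero]
  intro x hx
  by_contra hne
  have hx' : x + t • N x = 0 := by simpa using hx
  have ht0 : t ≠ 0 := by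
    rintro rfl
    simp at hx'
    exact hne hx'
  apply ht
  refine ⟨-t⁻¹, ?_, by simp⟩
  refine Module.End.hasEigenvalue_of_hasEigenvector (x := x) ⟨?_, hne⟩
  rw [Module.End.mem_eigenspace_iff]
  have h1 : t • N x = -x := by
    rw [eq_neg_iff_add_eq_zero, add_comm]; exact hx'
  rw [neg_smul, ← smul_neg, ← h1, smul_smul, inv_mul_cancel₀ ht0, one_smul]

lemma exists_bad_set_max {K M : Type*} [Field K] [AddCommGroup M] [Module K M]
    [FiniteDimensional K M] (f g : M →ₗ[K] M) (A B : Submodule K M)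
    (hf : ∀ x ∈ A, f x ∈ B) (hg : ∀ x ∈ A, g x ∈ B) (h : MaxRankOn f A B) :
    ∃ s : Set K, s.Finite ∧ ∀ t ∉ s, MaxRankOn (f + t • g) A B := by
  rcases h with h | h
  · obtain ⟨L, hL⟩ := LinearMap.exists_leftInverse_of_injective (f.domRestrict A) (by
      rw [LinearMap.ker_eq_bot, injective_iff_map_eq_zero]
      intro x hx
      exact Subtype.ext (h x x.2 hx))
    obtain ⟨s, hs, hs'⟩ := exists_bad_set (L ∘ₗ g.domRestrict A)
    refine ⟨s, hs, fun t ht => Or.inl ?_⟩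
    intro x hx hx0
    have h2 := (injective_iff_map_eq_zero _).1 (hs' t ht) ⟨x, hx⟩ (by
      have e1 : L (f x) = ⟨x, hx⟩ := LinearMap.congr_fun hL ⟨x, hx⟩
      have e2 : L (f x + t • g x) = 0 := by
        have : f x + t • g x = 0 := hx0
        rw [this, map_zero]
      rw [map_add, map_smul, e1] at e2
      exact e2)
    exact congrArg Subtype.val h2
  · obtain ⟨R, hR⟩ := LinearMap.exists_rightInverse_of_surjective (f.restrict hf) (by
      rw [LinearMap.range_eq_top]
      rintro ⟨y, hy⟩
      obtain ⟨x, hx, rfl⟩ := h hy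
      exact ⟨⟨x, hx⟩, rfl⟩)
    obtain ⟨s, hs, hs'⟩ := exists_bad_set (g.restrict hg ∘ₗ R)
    refine ⟨s, hs, fun t ht => Or.inr ?_⟩
    intro y hy
    obtain ⟨z, hz⟩ := LinearMap.injective_iff_surjective.1 (hs' t ht) ⟨y, hy⟩
    refine ⟨R z, (R z).2, ?_⟩
    have e1 : f (R z) = z := congrArg Subtype.val (LinearMap.congr_fun hR z)
    have e2 : (z : M) + t • g (R z) = y := congrArg Subtype.val hz
    simpa [e1] using e2

lemma mul_mem_gradedPiece {K : Type*} [Field K] {n : ℕ}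
    (I : Ideal (MvPolynomial (Fin n) K)) (j : ℤ) (l : MvPolynomial (Fin n) K)
    (hl : l.IsHomogeneous 1) : ∀ x ∈ gradedPiece I j,
    LinearMap.mulLeft K (Ideal.Quotient.mk I l) x ∈ gradedPiece I (j + 1) := by
  intro x hx
  unfold gradedPiece at *
  by_cases hj : 0 ≤ j
  · rw [if_pos hj] at hx
    rw [if_pos (by omega)]
    obtain ⟨p, hp, rfl⟩ := hx
    refine ⟨l * p, ?_, by simp⟩
    have : (j + 1).toNat = 1 + j.toNat := by omega
    rw [this]
    exact hl.mul hp
  · rw [if_neg hj] at hx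
    rw [(Submodule.mem_bot K).1 hx, map_zero]
    exact zero_mem _

lemma linear_form_eq {K : Type*} [Field K] {n : ℕ} (l : MvPolynomial (Fin n) K)
    (hl : l.IsHomogeneous 1) : l = ∑ i, C (coeff (Finsupp.single i 1) l) * X i := by
  have h : l ∈ homogeneousSubmodule (Fin n) K 1 := hl
  rw [homogeneousSubmodule_one_eq_span_X, Submodule.mem_span_range_iff_exists_fun] at h
  obtain ⟨c, rfl⟩ := h
  refine Finset.sum_congr rfl fun i _ => ?_
  rw [smul_eq_C_mul]
  congr 2
  simp [coeff_sum, coeff_X, Finsupp.single_left_inj]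

noncomputable def scl {K : Type*} [Field K] {n : ℕ} (c : Fin n → K) :
    MvPolynomial (Fin n) K →ₐ[K] MvPolynomial (Fin n) K :=
  aeval (fun i => C (c i) * X i)

lemma scl_monomial {K : Type*} [Field K] {n : ℕ} (c : Fin n → K) (s : Fin n →₀ ℕ) (a : K) :
    scl c (monomial s a) = C (∏ i, c i ^ s i) * monomial s a := by
  rw [scl, aeval_monomial, Finsupp.prod_fintype _ _ (by simp), monomial_eq (s := s),
    Finsupp.prod_fintype _ _ (by simp)]
  simp only [mul_pow, Finset.prod_mul_distrib, map_prod, map_pow, algebraMap_eq]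
  ring

lemma scl_mem {K : Type*} [Field K] {n : ℕ} (c : Fin n → K) (G : Set (Fin n →₀ ℕ)) :
    Ideal.span ((fun s => (monomial s (1 : K))) '' G) ≤
      (Ideal.span ((fun s => (monomial s (1 : K))) '' G)).comap (scl c) := by
  rw [Ideal.span_le]
  rintro _ ⟨s, hs, rfl⟩
  simp only [Ideal.coe_comap, Set.mem_preimage, SetLike.mem_coe]
  rw [scl_monomial]
  exact Ideal.mul_mem_left _ _ (Ideal.subset_span ⟨s, hs, rfl⟩)

lemma scl_scl {K : Type*} [Field K] {n : ℕ} (c d : Fin n → K) (h : ∀ i, c i * d i = 1)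
    (p : MvPolynomial (Fin n) K) : scl c (scl d p) = p := by
  have : (scl c).comp (scl d) = AlgHom.id K _ := by
    ext1 i
    simp only [scl, AlgHom.comp_apply, aeval_X, map_mul, algHom_C, AlgHom.id_apply, algebraMap_eq]
    rw [← mul_assoc, ← C_mul, mul_comm, mul_comm (d i), h]; simp
  exact DFunLike.congr_fun this p

lemma scl_homog {K : Type*} [Field K] {n : ℕ} (c : Fin n → K) (p : MvPolynomial (Fin n) K) (m : ℕ)
    (hp : p.IsHomogeneous m) : (scl c p).IsHomogeneous m := by
  have := hp.aeval (fun i => C (c i) * X i) (n := 1) (fun i => by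
        simpa using (isHomogeneous_C (Fin n) (c i)).mul (isHomogeneous_X K i))
  simpa [scl] using this

lemma maxRank_scale {K : Type*} [Field K] {n : ℕ}
    (I : Ideal (MvPolynomial (Fin n) K)) (hI : ∀ c : Fin n → K, I ≤ I.comap (scl c))
    (c : Fin n → K) (hc : ∀ i, c i ≠ 0) (j k : ℤ)
    (h : MaxRankOn (LinearMap.mulLeft K (Ideal.Quotient.mk I (∑ i, C (c i) * X i)))
      (gradedPiece I j) (gradedPiece I k)) :
    MaxRankOn (LinearMap.mulLeft K (Ideal.Quotient.mk I (∑ i, X i)))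
      (gradedPiece I j) (gradedPiece I k) := by
  let F : (Fin n → K) → (MvPolynomial (Fin n) K ⧸ I) →ₐ[K] (MvPolynomial (Fin n) K ⧸ I) :=
    fun d => Ideal.quotientMapₐ I (scl d) (hI d)
  have hFmk : ∀ d p, F d (Ideal.Quotient.mk I p) = Ideal.Quotient.mk I (scl d p) :=
    fun d p => rfl
  have hFg : ∀ d j, ∀ x ∈ gradedPiece I j, F d x ∈ gradedPiece I j := by
    intro d j x hx
    unfold gradedPiece at hx ⊢
    split_ifs at hx ⊢ with hj
    · obtain ⟨p, hp, rfl⟩ := hx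
      exact ⟨scl d p, scl_homog d p _ hp, rfl⟩
    · rw [(Submodule.mem_bot K).1 hx, map_zero]
      exact zero_mem _
  have hFF : ∀ x, F c⁻¹ (F c x) = x := by
    intro x
    obtain ⟨p, rfl⟩ := Ideal.Quotient.mk_surjective x
    rw [hFmk, hFmk, scl_scl _ _ (fun i => by simp [hc i])]
  have hl : F c (Ideal.Quotient.mk I (∑ i, X i)) = Ideal.Quotient.mk I (∑ i, C (c i) * X i) := by
    rw [hFmk]; simp [scl]
  rcases h with h | h
  · left
    intro x hx hx0
    rw [LinearMap.mulLeft_apply] at hx0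
    have := h (F c x) (hFg c j x hx) (by
      rw [LinearMap.mulLeft_apply, ← hl, ← map_mul, hx0, map_zero])
    rw [← hFF x, this, map_zero]
  · right
    intro y hy
    obtain ⟨z, hz, hzy⟩ := h (hFg c k y hy)
    refine ⟨F c⁻¹ z, hFg _ _ _ hz, ?_⟩
    rw [LinearMap.mulLeft_apply] at hzy ⊢
    rw [← hFF y, ← hzy, map_mul, ← hl, hFF]

/-- For an artinian monomial ideal `I ⊆ K[x_1,…,x_n]` over a field of
characteristic zero, `S/I` has the weak Lefschetz property if and only if
`x_1 + ⋯ + x_n` is a Lefschetz element. -/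
theorem monomial_WLP_iff_sum_of_variables_is_Lefschetz
    (K : Type*) [Field K] [CharZero K] (n : ℕ)
    (I : Ideal (MvPolynomial (Fin n) K))
    (hart : Module.Finite K (MvPolynomial (Fin n) K ⧸ I))
    (hmon : ∃ G : Set (Fin n →₀ ℕ),
      I = Ideal.span ((fun s => (monomial s (1 : K))) '' G)) :
    (∃ ℓ : MvPolynomial (Fin n) K, ℓ.IsHomogeneous 1 ∧
        ∀ j : ℤ, MaxRankOn (LinearMap.mulLeft K (Ideal.Quotient.mk I ℓ))
          (gradedPiece I j) (gradedPiece I (j + 1)))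
      ↔
    (∀ j : ℤ, MaxRankOn (LinearMap.mulLeft K (Ideal.Quotient.mk I (∑ i : Fin n, X i)))
          (gradedPiece I j) (gradedPiece I (j + 1))) := by
  have hX : (∑ i : Fin n, X i : MvPolynomial (Fin n) K).IsHomogeneous 1 :=
    IsHomogeneous.sum _ _ _ fun i _ => isHomogeneous_X K i
  refine ⟨?_, fun h => ⟨_, hX, h⟩⟩
  rintro ⟨l, hl, h⟩ j
  obtain ⟨G, hG⟩ := hmon
  obtain ⟨s, hs, hs'⟩ := exists_bad_set_max _
    (LinearMap.mulLeft K (Ideal.Quotient.mk I (∑ i : Fin n, X i))) _ _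
    (mul_mem_gradedPiece I j l hl) (mul_mem_gradedPiece I j _ hX) (h j)
  obtain ⟨t, ht⟩ := (hs.union (Set.finite_range
    (fun i => -coeff (Finsupp.single i 1) l))).exists_notMem
  rw [Set.mem_union, not_or] at ht
  refine maxRank_scale I (fun c => by rw [hG]; exact scl_mem c G)
    (fun i => coeff (Finsupp.single i 1) l + t) ?_ j (j + 1) ?_
  · intro i hi
    exact ht.2 ⟨i, by simp only; linear_combination -hi⟩
  · have key : (∑ i, C (coeff (Finsupp.single i 1) l + t) * X i : MvPolynomial (Fin n) K)
        = l + t • ∑ i, X i := by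
      conv_rhs => rw [linear_form_eq l hl]
      simp only [C_add, add_mul, Finset.sum_add_distrib, Finset.smul_sum, smul_eq_C_mul]
    have e : LinearMap.mulLeft K (Ideal.Quotient.mk I
        (∑ i, C (coeff (Finsupp.single i 1) l + t) * X i)) =
        LinearMap.mulLeft K (Ideal.Quotient.mk I l) +
        t • LinearMap.mulLeft K (Ideal.Quotient.mk I (∑ i : Fin n, X i)) := by
      rw [key]
      apply LinearMap.ext
      intro x
      have : Ideal.Quotient.mk I (t • ∑ i : Fin n, X i) =
        t • Ideal.Quotient.mk I (∑ i : Fin n, X i) := rfl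
      rw [map_add, this]
      simp only [LinearMap.add_apply, LinearMap.smul_apply, LinearMap.mulLeft_apply, add_mul,
        smul_mul_assoc]
    rw [e]
    exact hs' t ht.1
end

section
/- For all integers n, m, k with m ≥ 1 and 0 ≤ k ≤ n, the m×m Toeplitz matrix T_{n,m,k} whose (i,j)-th entry is the binomial coefficient C(n, k+j−i) (with the convention C(n,t) = 0 for t < 0 and t > n), viewed over a field of characteristic zero (e.g. over ℚ), is invertible. -/
open Polynomial in
theorem sparse_aux (n : ℕ) : ∀ P : ℚ[X], (X + 1) ^ n ∣ P → P.support.card ≤ n → P = 0 := by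
  induction n with
  | zero =>
    intro P _ h
    simpa using h
  | succ n ih =>
    intro P hd hc
    by_contra hP
    obtain ⟨a, ha⟩ := Polynomial.support_nonempty.mpr hP
    have hco : ∀ i : ℕ, (X * derivative P - C (a : ℚ) * P).coeff i = ((i : ℚ) - a) * P.coeff i := by
      intro i
      rw [coeff_sub, coeff_C_mul]
      cases i with
      | zero => simp
      | succ i => rw [coeff_X_mul, coeff_derivative]; push_cast; ring
    have hQ : X * derivative P - C (a : ℚ) * P = 0 := by
      apply ih
      · obtain ⟨R, rfl⟩ := hd
        refine dvd_sub (Dvd.dvd.mul_left ?_ _) (Dvd.dvd.mul_left ?_ _)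
        · rw [derivative_mul, derivative_pow]
          refine dvd_add ?_ ?_
          · refine Dvd.dvd.mul_right (Dvd.dvd.mul_right (Dvd.dvd.mul_left ?_ _) _) _
            simp
          · exact Dvd.dvd.mul_right (pow_dvd_pow _ (by omega)) _
        · exact Dvd.dvd.mul_right (pow_dvd_pow _ (by omega)) _
      · have hs : (X * derivative P - C (a : ℚ) * P).support ⊆ P.support.erase a := by
          intro i hi
          rw [mem_support_iff, hco] at hi
          rw [Finset.mem_erase, mem_support_iff]
          refine ⟨?_, right_ne_zero_of_mul hi⟩
          rintro rfl
          simp at hi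
        have h1 := Finset.card_le_card hs
        rw [Finset.card_erase_of_mem ha] at h1
        omega
    have hmon : P = monomial a (P.coeff a) := by
      ext i
      rw [coeff_monomial]
      split_ifs with h
      · rw [h]
      · have h2 := hco i
        rw [hQ, coeff_zero] at h2
        rcases mul_eq_zero.mp h2.symm with h3 | h3
        · exact absurd (by exact_mod_cast (sub_eq_zero.mp h3).symm) h
        · exact h3
    have hev : P.eval (-1) = 0 := by
      obtain ⟨R, rfl⟩ := hd
      simp
    rw [hmon, eval_monomial] at hev
    rcases mul_eq_zero.mp hev with h | h
    · exact (mem_support_iff.mp ha) h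
    · exact pow_ne_zero a (by norm_num) h


/-- For integers `n, m, k` with `m ≥ 1` and `0 ≤ k ≤ n`, the `m × m`
Toeplitz matrix whose `(i,j)`-th entry is the binomial coefficient `C(n, k + j - i)`
(with the convention that `C(n,t) = 0` for `t < 0` and `t > n`), viewed over `ℚ`,
is invertible. -/
theorem toeplitz_binomial_matrix_is_invertible (n m k : ℕ) (hm : 1 ≤ m) (hk : k ≤ n) :
    IsUnit (Matrix.of (fun i j : Fin m =>
      if (i : ℕ) ≤ k + (j : ℕ) then ((n.choose (k + (j : ℕ) - (i : ℕ)) : ℚ)) else 0)) := by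
  classical
  rw [← Matrix.vecMul_injective_iff_isUnit]
  set A : Matrix (Fin m) (Fin m) ℚ := Matrix.of (fun i j : Fin m =>
      if (i : ℕ) ≤ k + (j : ℕ) then ((n.choose (k + (j : ℕ) - (i : ℕ)) : ℚ)) else 0) with hA
  have key : ∀ u : Fin m → ℚ, Matrix.vecMul u A = 0 → u = 0 := by
    intro u hu
    let U : Polynomial ℚ := ∑ i : Fin m, Polynomial.C (u i) * Polynomial.X ^ (i : ℕ)
    have hUc : ∀ j : Fin m, U.coeff j = u j := by
      intro j
      simp only [U, Polynomial.finsetSum_coeff, Polynomial.coeff_C_mul, Polynomial.coeff_X_pow]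
      simp [Fin.val_inj]
    have hPc : ∀ d, ((Polynomial.X + 1) ^ n * U).coeff d
        = ∑ i : Fin m, u i * (if (i : ℕ) ≤ d then (n.choose (d - (i : ℕ)) : ℚ) else 0) := by
      intro d
      simp only [U, Finset.mul_sum, Polynomial.finsetSum_coeff]
      refine Finset.sum_congr rfl fun i _ => ?_
      rw [mul_left_comm, Polynomial.coeff_C_mul, Polynomial.coeff_mul_X_pow',
        Polynomial.coeff_X_add_one_pow]
    have hP : (Polynomial.X + 1) ^ n * U = 0 := by
      apply sparse_aux n _ (dvd_mul_right _ _)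
      have hs : ((Polynomial.X + 1) ^ n * U).support ⊆
          Finset.range k ∪ Finset.Ico (k + m) (n + m) := by
        intro d hd
        rw [Polynomial.mem_support_iff] at hd
        by_contra hnot
        apply hd
        simp only [Finset.mem_union, Finset.mem_range, Finset.mem_Ico] at hnot
        rw [hPc]
        by_cases h : d < k + m
        · have h1 := congrFun hu ⟨d - k, by omega⟩
          have h2 : k + (d - k) = d := by omega
          simpa [Matrix.vecMul, dotProduct, hA, h2] using h1
        · refine Finset.sum_eq_zero fun i _ => ?_
          have := i.isLt
          rw [Nat.choose_eq_zero_of_lt (by omega)]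
          simp
      have h1 := (Finset.card_le_card hs).trans (Finset.card_union_le _ _)
      simp only [Finset.card_range, Nat.card_Ico] at h1
      omega
    have hX : (Polynomial.X + 1 : Polynomial ℚ) ^ n ≠ 0 := by
      apply pow_ne_zero
      simpa using Polynomial.X_add_C_ne_zero (1 : ℚ)
    have hU : U = 0 := (mul_eq_zero.mp hP).resolve_left hX
    funext j
    rw [← hUc j, hU]
    simp
  intro u v huv
  have := key (u - v) (by rw [Matrix.sub_vecMul]; exact sub_eq_zero.mpr huv)
  exact sub_eq_zero.mp this
end

section
/- Let K be a field of characteristic zero, S = K[x_1,…,x_n], and let M = {m_1,…,m_r} be a set of monomials of degree d in S forming a line segment with respect to (x_i, x_j), i.e. x_i·x_j divides m_t for all 1 ≤ t ≤ r and (x_j/x_i)·m_t = m_{t+1} for all 1 ≤ t ≤ r−1. Let J_M be the ideal generated by all monomials of degree d in S not belonging to M. If a, b ≥ 0 are integers such that x_i^a·x_j^b divides m_t for every 1 ≤ t ≤ r, then the multiplication map ×(x_i+x_j)^{a+b} : (S/J_M)_{k−a−b} → (S/J_M)_k has maximal rank for every integer k. -/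
open MvPolynomial

theorem LS_poly_key {K : Type*} [Field K] [CharZero K] (N : ℕ) :
    ∀ F : Polynomial K, F.support.card ≤ N → (Polynomial.X + 1) ^ N ∣ F → F = 0 := by
  induction N with
  | zero =>
    intro F h _
    simpa using h
  | succ N ih =>
    intro F hc hd
    by_contra hF
    obtain ⟨m, hm⟩ := Polynomial.support_nonempty.2 hF
    have hco : ∀ k : ℕ, (Polynomial.X * Polynomial.derivative F - Polynomial.C (m : K) * F).coeff k
        = ((k : K) - m) * F.coeff k := by
      intro k
      cases k with
      | zero => simp
      | succ k =>
        simp [Polynomial.coeff_X_mul, Polynomial.coeff_derivative]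
        ring
    have h0 : Polynomial.X * Polynomial.derivative F - Polynomial.C (m : K) * F = 0 := by
      apply ih
      · have : (Polynomial.X * Polynomial.derivative F - Polynomial.C (m : K) * F).support
            ⊆ F.support.erase m := by
          intro k hk
          rw [Polynomial.mem_support_iff, hco] at hk
          rw [Finset.mem_erase, Polynomial.mem_support_iff]
          refine ⟨?_, right_ne_zero_of_mul hk⟩
          rintro rfl
          simp at hk
        have h2 := Finset.card_le_card this
        rw [Finset.card_erase_of_mem hm] at h2
        omega
      · apply dvd_sub
        · apply Dvd.dvd.mul_left
          obtain ⟨G, rfl⟩ := hd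
          rw [Polynomial.derivative_mul]
          apply dvd_add
          · rw [Polynomial.derivative_pow]
            simp only [Nat.add_sub_cancel]
            exact ⟨Polynomial.C ((N + 1 : ℕ) : K) * Polynomial.derivative (Polynomial.X + 1) * G,
              by ring⟩
          · exact ⟨(Polynomial.X + 1) * Polynomial.derivative G, by ring⟩
        · exact Dvd.dvd.mul_left ((pow_dvd_pow _ (Nat.le_succ N)).trans hd) _
    have hF2 : F = Polynomial.monomial m (F.coeff m) := by
      ext k
      rw [Polynomial.coeff_monomial]
      split_ifs with h
      · rw [h]
      · have := hco k
        rw [h0, Polynomial.coeff_zero] at this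
        rcases mul_eq_zero.1 this.symm with h1 | h1
        · exact absurd (Nat.cast_injective (sub_eq_zero.1 h1)).symm h
        · exact h1
    have he : F.eval (-1) = 0 := by
      obtain ⟨G, rfl⟩ := hd
      simp
    rw [hF2, Polynomial.eval_monomial] at he
    rcases mul_eq_zero.1 he with h | h
    · exact (Polynomial.mem_support_iff.1 hm) h
    · exact absurd h (pow_ne_zero _ (by simp))

theorem LS_coeff {K : Type*} [Field K] (N r : ℕ) (c : Fin r → K) (k : ℕ) :
    ((Polynomial.X + 1) ^ N * ∑ t : Fin r, Polynomial.monomial (t : ℕ) (c t)).coeff k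
      = ∑ t : Fin r, c t * ∑ q ∈ Finset.range (N + 1),
          if q + (t : ℕ) = k then (N.choose q : K) else 0 := by
  rw [Finset.mul_sum, Polynomial.finsetSum_coeff]
  refine Finset.sum_congr rfl fun t _ => ?_
  rw [add_pow, Finset.sum_mul, Polynomial.finsetSum_coeff, Finset.mul_sum]
  refine Finset.sum_congr rfl fun q _ => ?_
  have : (Polynomial.X ^ q * 1 ^ (N - q) * (N.choose q : Polynomial K)) *
      Polynomial.monomial (t : ℕ) (c t)
      = Polynomial.monomial (q + (t : ℕ)) (c t * (N.choose q : K)) := by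
    rw [← Polynomial.C_mul_X_pow_eq_monomial, ← Polynomial.C_mul_X_pow_eq_monomial]
    simp only [map_mul, map_natCast, one_pow, pow_add]
    ring
  rw [this, Polynomial.coeff_monomial]
  simp

theorem LS_surj {K : Type*} [Field K] [CharZero K] (a b r : ℕ) (g : Fin r → K) :
    ∃ c : Fin r → K, ∀ s : Fin r, ∑ t : Fin r, c t * ∑ q ∈ Finset.range (a + b + 1),
          (if q + (t : ℕ) = b + s then ((a + b).choose q : K) else 0) = g s := by
  let A : Matrix (Fin r) (Fin r) K := fun s t => ∑ q ∈ Finset.range (a + b + 1),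
          (if q + (t : ℕ) = b + s then ((a + b).choose q : K) else 0)
  have hA : ∀ c s, A.mulVecLin c s = ∑ t : Fin r, c t * ∑ q ∈ Finset.range (a + b + 1),
          (if q + (t : ℕ) = b + s then ((a + b).choose q : K) else 0) := by
    intro c s
    rw [Matrix.mulVecLin_apply]
    change ∑ t, A s t * c t = _
    exact Finset.sum_congr rfl fun t _ => mul_comm (A s t) (c t)
  have hinj : Function.Injective A.mulVecLin := by
    rw [injective_iff_map_eq_zero]
    intro c hc
    have hP0 : (Polynomial.X + 1) ^ (a + b) *
        ∑ t : Fin r, Polynomial.monomial (t : ℕ) (c t) = 0 := by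
      apply LS_poly_key (a + b) _ _ (dvd_mul_right _ _)
      have hsub : ((Polynomial.X + 1) ^ (a + b) *
        ∑ t : Fin r, Polynomial.monomial (t : ℕ) (c t)).support
          ⊆ Finset.range b ∪ Finset.Ico (b + r) (a + b + r) := by
        intro k hk
        rw [Polynomial.mem_support_iff] at hk
        by_contra hnot
        simp only [Finset.mem_union, Finset.mem_range, Finset.mem_Ico, not_or, not_and,
          not_lt] at hnot
        apply hk
        by_cases hkr : k < b + r
        · have := congrFun hc ⟨k - b, by omega⟩
          rw [hA] at this
          rw [LS_coeff]
          simpa [show b + (k - b) = k by omega] using this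
        · rw [LS_coeff]
          refine Finset.sum_eq_zero fun t _ => ?_
          rw [Finset.sum_eq_zero, mul_zero]
          intro q hq
          rw [if_neg]
          have := Finset.mem_range.1 hq
          have := t.2
          omega
      refine (Finset.card_le_card hsub).trans ((Finset.card_union_le _ _).trans ?_)
      simp
      omega
    have hne : ((Polynomial.X + 1) ^ (a + b) : Polynomial K) ≠ 0 := by
      apply pow_ne_zero
      simpa using Polynomial.X_add_C_ne_zero (1 : K)
    have hP := (mul_eq_zero.1 hP0).resolve_left hne
    funext t
    have := congrArg (fun p => Polynomial.coeff p (t : ℕ)) hP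
    simpa [Polynomial.finsetSum_coeff, Polynomial.coeff_monomial, Fin.val_inj] using this
  obtain ⟨c, hc⟩ := (LinearMap.injective_iff_surjective.1 hinj) g
  exact ⟨c, fun s => by rw [← hA, hc]⟩

theorem LS_split {n : ℕ} (d : ℕ) (s : Fin n →₀ ℕ) (h : d ≤ s.degree) :
    ∃ s1 s2 : Fin n →₀ ℕ, s = s1 + s2 ∧ s2.degree = d := by
  induction hm : s.degree - d generalizing s with
  | zero => exact ⟨0, s, by simp, by omega⟩
  | succ m ih =>
    have hs : s ≠ 0 := by
      rintro rfl
      simp at hm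
    obtain ⟨l, hl⟩ := Finsupp.ne_iff.1 hs
    have hle : Finsupp.single l 1 ≤ s := by
      rw [Finsupp.single_le_iff]
      simp at hl
      omega
    obtain ⟨w, rfl⟩ := exists_add_of_le hle
    have hdw : (Finsupp.single l 1 + w).degree = 1 + w.degree := by
      rw [map_add, Finsupp.degree_single]
    obtain ⟨s1, s2, h1, h2⟩ := ih w (by omega) (by omega)
    exact ⟨Finsupp.single l 1 + s1, s2, by rw [h1, add_assoc], h2⟩

theorem LS_dvd {K : Type*} [Field K] {n : ℕ} (i j : Fin n) (a b : ℕ) (v : Fin n →₀ ℕ)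
    (h : (X i ^ a * X j ^ b : MvPolynomial (Fin n) K) ∣ monomial v 1) :
    ∃ u : Fin n →₀ ℕ, v = u + (Finsupp.single i a + Finsupp.single j b) := by
  rw [X_pow_eq_monomial, X_pow_eq_monomial, monomial_mul, one_mul, monomial_dvd_monomial] at h
  rcases h.1 with h | h
  · simp at h
  · obtain ⟨u, hu⟩ := exists_add_of_le h
    exact ⟨u, by rw [hu, add_comm]⟩

theorem LS_core (K : Type*) [Field K] [CharZero K] (n d r : ℕ) (i j : Fin n)
    (e : Fin r → (Fin n →₀ ℕ))
    (hdeg : ∀ t, (e t).degree = d)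
    (hstep : ∀ (t : Fin r) (ht : (t : ℕ) + 1 < r),
      e ⟨(t : ℕ) + 1, ht⟩ + Finsupp.single i 1 = e t + Finsupp.single j 1)
    (a b : ℕ)
    (hab : ∀ t, (X i ^ a * X j ^ b : MvPolynomial (Fin n) K) ∣ monomial (e t) 1)
    (t0 : Fin r) :
    a + b ≤ d ∧ ∃ G : MvPolynomial (Fin n) K, G.IsHomogeneous (d - (a + b)) ∧
      ∀ s, coeff (e s) (monomial (e t0) 1 - (X i + X j) ^ (a + b) * G) = 0 := by
  choose u hu using fun t => LS_dvd i j a b (e t) (hab t)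
  have hud : ∀ t, (u t).degree + (a + b) = d := by
    intro t
    have := hdeg t
    rw [hu, map_add, map_add, Finsupp.degree_single, Finsupp.degree_single] at this
    omega
  have hr : 0 < r := t0.pos
  have hacc : ∀ (t : ℕ) (ht : t < r),
      e ⟨t, ht⟩ + Finsupp.single i t = e ⟨0, hr⟩ + Finsupp.single j t := by
    intro t
    induction t with
    | zero => intro ht; simp
    | succ t ih =>
      intro ht
      have h1 := ih (by omega)
      have h2 := hstep ⟨t, by omega⟩ ht
      rw [Finsupp.single_add, Finsupp.single_add, add_comm (Finsupp.single i t), ← add_assoc, h2,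
        add_right_comm, h1, add_assoc]
  refine ⟨by have := hud t0; omega, ?_⟩
  by_cases hij : i = j
  · subst hij
    have hall : ∀ t, e t = e t0 := by
      intro t
      have h1 := add_right_cancel (hacc t t.2)
      have h2 := add_right_cancel (hacc t0 t0.2)
      exact h1.trans h2.symm
    refine ⟨monomial (u t0) ((2 : K) ^ (a + b))⁻¹, isHomogeneous_monomial _ ?_, ?_⟩
    · have := hud t0; omega
    · intro s
      have : (X i + X i : MvPolynomial (Fin n) K) ^ (a + b) *
          monomial (u t0) ((2 : K) ^ (a + b))⁻¹ = monomial (e t0) 1 := by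
        have h2 : (X i + X i : MvPolynomial (Fin n) K) = monomial (Finsupp.single i 1) 2 := by
          rw [X, ← map_add]
          norm_num
        rw [h2, monomial_pow, monomial_mul, mul_inv_cancel₀ (pow_ne_zero _ two_ne_zero), hu t0]
        congr 1
        rw [← Finsupp.single_add, add_comm]
        simp
      rw [this, sub_self, coeff_zero]
  · obtain ⟨c, hc⟩ := LS_surj (K := K) a b r (fun s => if s = t0 then 1 else 0)
    have hval : ∀ t : Fin r, ∀ l, e t l + Finsupp.single i (t : ℕ) l
        = e ⟨0, hr⟩ l + Finsupp.single j (t : ℕ) l := fun t l =>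
      DFunLike.congr_fun (hacc t t.2) l
    have huv : ∀ t l, e t l = u t l + (Finsupp.single i a l + Finsupp.single j b l) :=
      fun t l => DFunLike.congr_fun (hu t) l
    have hiff : ∀ (s t : Fin r) (q : ℕ), q ≤ a + b →
        ((Finsupp.single i q + Finsupp.single j (a + b - q) + u t : Fin n →₀ ℕ) = e s ↔
          (a + b - q) + (t : ℕ) = b + s) := by
      intro s t q hq
      have hti := hval t i
      have htj := hval t j
      have hsi := hval s i
      have hsj := hval s j
      have hui := huv t i
      have huj := huv t j
      simp only [Finsupp.single_apply, hij, Ne.symm hij, if_true, if_false] at hti htj hsi hsj hui huj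
      constructor
      · intro h
        have h1 := DFunLike.congr_fun h j
        simp only [Finsupp.add_apply, Finsupp.single_apply, hij, if_true, if_false] at h1
        omega
      · intro h
        ext l
        have htl := hval t l
        have hsl := hval s l
        have hul := huv t l
        simp only [Finsupp.add_apply]
        by_cases hli : i = l
        · subst hli
          simp only [Finsupp.single_apply, Ne.symm hij, if_true, if_false]
          omega
        · by_cases hlj : j = l
          · subst hlj
            simp only [Finsupp.single_apply, hij, if_true, if_false]
            omega
          · simp only [Finsupp.single_apply, hli, hlj, if_false] at htl hsl hul ⊢
            omega
    refine ⟨∑ t, monomial (u t) (c t), ?_, ?_⟩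
    · apply IsHomogeneous.sum
      intro t _
      apply isHomogeneous_monomial
      have := hud t
      omega
    · intro s
      have hinj : e s = e t0 ↔ s = t0 := by
        constructor
        · intro h
          have h1 := hval s j
          have h2 := hval t0 j
          simp only [Finsupp.single_apply, hij, if_true, if_false, h] at h1 h2
          exact Fin.ext (by omega)
        · rintro rfl; rfl
      have hmain : coeff (e s) ((X i + X j) ^ (a + b) * ∑ t, monomial (u t) (c t))
          = if s = t0 then (1 : K) else 0 := by
        rw [← hc s, Finset.mul_sum, coeff_sum]
        refine Finset.sum_congr rfl fun t _ => ?_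
        rw [← Finset.sum_range_reflect, add_pow, Finset.sum_mul, coeff_sum, Finset.mul_sum]
        refine Finset.sum_congr rfl fun q hq => ?_
        have hq' : q ≤ a + b := by
          have := Finset.mem_range.1 hq
          omega
        have hmon : (X i ^ q * X j ^ (a + b - q) * ((a + b).choose q : MvPolynomial (Fin n) K)) *
            monomial (u t) (c t) = monomial (Finsupp.single i q + Finsupp.single j (a + b - q) + u t)
              (c t * ((a + b).choose q : K)) := by
          have hC : ((a + b).choose q : MvPolynomial (Fin n) K)
            = monomial 0 ((a + b).choose q : K) := by
            rw [← C_apply, map_natCast]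
          rw [hC, X_pow_eq_monomial, X_pow_eq_monomial, monomial_mul, monomial_mul, monomial_mul]
          simp [mul_comm]
        rw [hmon, coeff_monomial]
        have hsub : a + b + 1 - 1 - q = a + b - q := by omega
        simp only [hiff s t q hq', hsub, Nat.choose_symm hq', mul_ite, mul_zero]
      rw [coeff_sub, hmain, coeff_monomial]
      by_cases h : s = t0
      · simp [h]
      · have : ¬ e t0 = e s := fun h' => h (hinj.1 h'.symm)
        simp [h, this]

/-- Let `M = {m_1,…,m_r}` be a set of degree-`d` monomials in
`S = K[x_1,…,x_n]` forming a line segment with respect to `(x_i, x_j)`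
(each `m_t` is divisible by `x_i x_j` and `(x_j/x_i)·m_t = m_{t+1}`), and let `J_M` be the
ideal generated by all degree-`d` monomials not in `M`. If `x_i^a x_j^b` divides every `m_t`,
then `×(x_i+x_j)^{a+b} : (S/J_M)_{k-a-b} → (S/J_M)_k` has maximal rank for every integer `k`.
(Monomials are recorded by their exponent vectors `e t : Fin n →₀ ℕ`, so `m_t = monomial (e t) 1`.) -/
theorem line_segment_complement_has_maximal_rank
    (K : Type*) [Field K] [CharZero K] (n d r : ℕ) (i j : Fin n)
    (e : Fin r → (Fin n →₀ ℕ))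
    (hdeg : ∀ t, ((e t).sum fun _ v => v) = d)
    (hsegdvd : ∀ t, (X i * X j : MvPolynomial (Fin n) K) ∣ monomial (e t) 1)
    (hstep : ∀ (t : Fin r) (ht : (t : ℕ) + 1 < r),
      e ⟨(t : ℕ) + 1, ht⟩ + Finsupp.single i 1 = e t + Finsupp.single j 1)
    (J : Ideal (MvPolynomial (Fin n) K))
    (hJ : J = Ideal.span {p : MvPolynomial (Fin n) K | ∃ s : Fin n →₀ ℕ,
      (s.sum fun _ v => v) = d ∧ (∀ t, s ≠ e t) ∧ p = monomial s 1})
    (a b : ℕ)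
    (hab : ∀ t, (X i ^ a * X j ^ b : MvPolynomial (Fin n) K) ∣ monomial (e t) 1) :
    ∀ k : ℤ,
      MaxRankOn (LinearMap.mulLeft K (Ideal.Quotient.mk J ((X i + X j) ^ (a + b))))
        (gradedPiece J (k - (a + b))) (gradedPiece J k) := by
  have hdeg' : ∀ t, (e t).degree = d := fun t => hdeg t
  have hmem : ∀ p : MvPolynomial (Fin n) K, p ∈ J ↔ ∀ v ∈ p.support,
      ∃ s : Fin n →₀ ℕ, (s.degree = d ∧ ∀ t, s ≠ e t) ∧ s ≤ v := by
    intro p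
    have : {p : MvPolynomial (Fin n) K | ∃ s : Fin n →₀ ℕ,
      (s.sum fun _ v => v) = d ∧ (∀ t, s ≠ e t) ∧ p = monomial s 1}
      = (fun s => monomial s (1 : K)) '' {s : Fin n →₀ ℕ | s.degree = d ∧ ∀ t, s ≠ e t} := by
      ext q
      constructor
      · rintro ⟨s, h1, h2, rfl⟩
        exact ⟨s, ⟨h1, h2⟩, rfl⟩
      · rintro ⟨s, ⟨h1, h2⟩, rfl⟩
        exact ⟨s, h1, h2, rfl⟩
    rw [hJ, this, mem_ideal_span_monomial_image]
    rfl
  have hf0 : ((X i + X j) ^ (a + b) : MvPolynomial (Fin n) K) ≠ 0 := by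
    apply pow_ne_zero
    intro h
    have := congrArg (MvPolynomial.eval (fun _ => (1 : K))) h
    norm_num at this
  have hfhom : ((X i + X j) ^ (a + b) : MvPolynomial (Fin n) K).IsHomogeneous (a + b) := by
    have := ((isHomogeneous_X K i).add (isHomogeneous_X K j)).pow (a + b)
    simpa using this
  have hw : ∀ v : Fin n →₀ ℕ, Finsupp.weight (1 : Fin n → ℕ) v = v.degree := by
    intro v
    rw [Finsupp.degree_eq_weight_one]
    rfl
  intro k
  unfold MaxRankOn
  by_cases hneg : 0 ≤ k - (a + b)
  swap
  · left
    intro x hx _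
    rw [gradedPiece, if_neg hneg] at hx
    exact (Submodule.mem_bot K).1 hx
  have hk : 0 ≤ k := by omega
  obtain ⟨N, hN⟩ : ∃ N : ℕ, k - (a + b) = N := ⟨_, (Int.toNat_of_nonneg hneg).symm⟩
  have hkN : k = ((N + (a + b) : ℕ) : ℤ) := by push_cast; omega
  rw [hN, hkN]
  simp only [gradedPiece, Int.natCast_nonneg, if_true, Int.toNat_natCast]
  by_cases hkd : N + (a + b) < d
  · left
    rintro x ⟨p, hp, rfl⟩ hx
    have hp' : p.IsHomogeneous N := hp
    have hx' : Ideal.Quotient.mk J ((X i + X j) ^ (a + b) * p) = 0 := by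
      rw [map_mul]
      exact hx
    rw [Ideal.Quotient.eq_zero_iff_mem, hmem] at hx'
    have hz : (X i + X j) ^ (a + b) * p = 0 := by
      rw [← support_eq_empty, Finset.eq_empty_iff_forall_notMem]
      intro v hv
      obtain ⟨s, ⟨hs, _⟩, hle⟩ := hx' v hv
      have hvd := (hfhom.mul hp') (mem_support_iff.1 hv)
      rw [hw] at hvd
      have := Finsupp.degree_mono hle
      omega
    rw [(mul_eq_zero.1 hz).resolve_left hf0, map_zero]
  · right
    have hmono : ∀ s : Fin n →₀ ℕ, s.degree = d → ∃ G : MvPolynomial (Fin n) K,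
        (G = 0 ∨ (a + b ≤ d ∧ G.IsHomogeneous (d - (a + b)))) ∧
        monomial s 1 - (X i + X j) ^ (a + b) * G ∈ J := by
      intro s hs
      by_cases hst : ∃ t, s = e t
      · obtain ⟨t0, rfl⟩ := hst
        obtain ⟨hle, G, hG, hco⟩ := LS_core K n d r i j e hdeg' hstep a b hab t0
        refine ⟨G, Or.inr ⟨hle, hG⟩, ?_⟩
        rw [hmem]
        intro v hv
        refine ⟨v, ⟨?_, ?_⟩, le_rfl⟩
        · have h1 : (monomial (e t0) (1 : K)).IsHomogeneous d := isHomogeneous_monomial _ hs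
          have h2 := hfhom.mul hG
          rw [Nat.add_sub_cancel' hle] at h2
          have h3 := (h1.sub h2) (mem_support_iff.1 hv)
          rw [hw] at h3
          exact h3
        · rintro t rfl
          exact (mem_support_iff.1 hv) (hco t)
      · push Not at hst
        refine ⟨0, Or.inl rfl, ?_⟩
        rw [mul_zero, sub_zero, hmem]
        intro v hv
        have := support_monomial_subset hv
        rw [Finset.mem_singleton] at this
        subst this
        exact ⟨v, ⟨hs, hst⟩, le_rfl⟩
    rintro x ⟨p, hp, rfl⟩
    have hp' : p.IsHomogeneous (N + (a + b)) := hp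
    rw [p.as_sum, map_sum]
    refine Submodule.sum_mem _ fun v hv => ?_
    have hvd := hp' (mem_support_iff.1 hv)
    rw [hw] at hvd
    have hvd' : v.degree = N + (a + b) := hvd
    obtain ⟨s1, s2, rfl, hs2⟩ := LS_split d v (by omega)
    obtain ⟨G, hG, hGJ⟩ := hmono s2 hs2
    rw [map_add] at hvd'
    refine ⟨Ideal.Quotient.mk J (monomial s1 (coeff (s1 + s2) p) * G), ⟨_, ?_, rfl⟩, ?_⟩
    · rcases hG with rfl | ⟨hle, hG⟩
      · simp
      · have h1 : (monomial s1 (coeff (s1 + s2) p)).IsHomogeneous s1.degree :=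
          isHomogeneous_monomial _ rfl
        have h2 := h1.mul hG
        rw [show s1.degree + (d - (a + b)) = N by omega] at h2
        exact h2
    · rw [LinearMap.mulLeft_apply, ← map_mul]
      symm
      refine Ideal.Quotient.eq.2 ?_
      have h1 : monomial (s1 + s2) (coeff (s1 + s2) p)
          = monomial s1 (coeff (s1 + s2) p) * monomial s2 1 := by
        rw [monomial_mul, mul_one]
      rw [h1]
      have h2 := J.mul_mem_left (monomial s1 (coeff (s1 + s2) p)) hGJ
      convert h2 using 1
      ring
end

section
/- Let K be a field of characteristic zero and let I ⊂ S = K[x_1,…,x_n] be an artinian monomial ideal generated in a single degree d. Suppose there exist integers 1 ≤ i < j ≤ n and a, b ≥ 0 such that every monomial of degree d not contained in I is divisible by x_i^a·x_j^b. Then the multiplication map ×(x_i+x_j)^{a+b} : (S/I)_{k−a−b} → (S/I)_k has maximal rank for every integer k. -/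
open MvPolynomial

lemma aux_sparse {K : Type*} [Field K] [CharZero K] (E : Finset ℕ) :
    ∀ P : Polynomial K, (∀ u, u ∉ E → P.coeff u = 0) →
      (Polynomial.X + 1 : Polynomial K) ^ E.card ∣ P → P = 0 := by
  classical
  induction E using Finset.induction_on with
  | empty => intro P h _; ext u; simpa using h u
  | insert e E he ih =>
    intro P h hd
    rw [Finset.card_insert_of_notMem he] at hd
    have hQ : Polynomial.X * Polynomial.derivative P - Polynomial.C (e : K) * P = 0 := by
      apply ih
      · intro u hu
        have hc : (Polynomial.X * Polynomial.derivative P - Polynomial.C (e : K) * P).coeff u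
            = ((u : K) - e) * P.coeff u := by
          cases u with
          | zero => simp
          | succ u => simp [Polynomial.coeff_X_mul, Polynomial.coeff_derivative]; ring
        rw [hc]
        by_cases hue : u = e
        · subst hue; simp
        · rw [h u (by simp [hue, hu]), mul_zero]
      · apply dvd_sub
        · apply Dvd.dvd.mul_left
          simpa using Polynomial.pow_sub_one_dvd_derivative_of_pow_dvd hd
        · apply Dvd.dvd.mul_left
          exact (pow_dvd_pow _ (Nat.le_succ _)).trans hd
    have hc : ∀ u, u ≠ e → P.coeff u = 0 := by
      intro u hu
      have h1 : ((u : K) - e) * P.coeff u = 0 := by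
        have := congrArg (fun q => Polynomial.coeff q u) hQ
        cases u with
        | zero => simpa using this
        | succ u =>
          simp [Polynomial.coeff_X_mul, Polynomial.coeff_derivative] at this
          push_cast
          linear_combination this
      rcases mul_eq_zero.1 h1 with h2 | h2
      · exact absurd (by exact_mod_cast sub_eq_zero.1 h2) hu
      · exact h2
    have hP : P = Polynomial.C (P.coeff e) * Polynomial.X ^ e := by
      ext u
      rw [Polynomial.coeff_C_mul_X_pow]
      split_ifs with hu
      · rw [hu]
      · exact hc u hu
    have h1 : (Polynomial.X + 1 : Polynomial K) ∣ P := (dvd_pow_self _ (by simp)).trans hd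
    obtain ⟨q, hq⟩ := h1
    have h2 : Polynomial.eval (-1) P = 0 := by rw [hq]; simp
    rw [hP] at h2
    simp at h2
    rw [hP, h2]; simp

lemma aux_inj {K : Type*} [Field K] [CharZero K] (a b D : ℕ) (f : Polynomial K)
    (hf : f.natDegree ≤ D)
    (h : ∀ r ≤ D, (((Polynomial.X + 1) ^ (a + b) * f : Polynomial K)).coeff (a + r) = 0) :
    f = 0 := by
  have hX : (Polynomial.X + 1 : Polynomial K).natDegree = 1 := by
    simpa using Polynomial.natDegree_X_add_C (1 : K)
  have hX0 : (Polynomial.X + 1 : Polynomial K) ≠ 0 := by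
    intro h0; rw [h0] at hX; simp at hX
  have key := aux_sparse (Finset.range a ∪ Finset.Ico (a + D + 1) (a + D + 1 + b))
    ((Polynomial.X + 1) ^ (a + b) * f) ?_ ?_
  · rcases mul_eq_zero.1 key with h1 | h1
    · exact absurd h1 (pow_ne_zero _ hX0)
    · exact h1
  · intro u hu
    simp only [Finset.mem_union, Finset.mem_range, Finset.mem_Ico, not_or, not_and, not_lt] at hu
    by_cases h2 : u ≤ a + D
    · obtain ⟨r, rfl⟩ := Nat.exists_eq_add_of_le hu.1
      exact h r (by omega)
    · apply Polynomial.coeff_eq_zero_of_natDegree_lt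
      have h3 := hu.2 (by omega)
      have h4 : ((Polynomial.X + 1) ^ (a + b) * f : Polynomial K).natDegree ≤ (a + b) + D := by
        refine Polynomial.natDegree_mul_le_of_le ?_ hf
        rw [Polynomial.natDegree_pow, hX, mul_one]
      omega
  · rw [Finset.card_union_of_disjoint]
    · simp
    · rw [Finset.disjoint_left]
      intro u hu
      simp at hu ⊢
      omega

lemma aux_surj {K : Type*} [Field K] [CharZero K] (a b D p : ℕ) :
    ∃ f : Polynomial K, f.natDegree ≤ D ∧
      ∀ r ≤ D, (((Polynomial.X + 1) ^ (a + b) * f : Polynomial K)).coeff (a + r) =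
        if r = p then 1 else 0 := by
  let T : Polynomial.degreeLT K (D + 1) →ₗ[K] (Fin (D + 1) → K) :=
    LinearMap.pi (fun r => (Polynomial.lcoeff K (a + r)) ∘ₗ
      (LinearMap.mulLeft K ((Polynomial.X + 1) ^ (a + b) : Polynomial K)) ∘ₗ
      (Polynomial.degreeLT K (D + 1)).subtype)
  have hdeg : ∀ f : Polynomial.degreeLT K (D + 1), (f : Polynomial K).natDegree ≤ D := by
    intro f
    have := f.2
    rw [Polynomial.mem_degreeLT] at this
    by_cases h0 : (f : Polynomial K) = 0
    · simp [h0]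
    · exact Nat.lt_succ_iff.1 ((Polynomial.natDegree_lt_iff_degree_lt h0).2 this)
  have hinj : Function.Injective T := by
    rw [injective_iff_map_eq_zero]
    intro f hf
    apply Subtype.ext
    apply aux_inj a b D _ (hdeg f)
    intro r hr
    exact congrFun hf ⟨r, by omega⟩
  have hfin : Module.finrank K (Polynomial.degreeLT K (D + 1)) =
      Module.finrank K (Fin (D + 1) → K) :=
    (Polynomial.degreeLTEquiv K (D + 1)).finrank_eq
  have : FiniteDimensional K (Polynomial.degreeLT K (D + 1)) :=
    Module.Finite.equiv (Polynomial.degreeLTEquiv K (D + 1)).symm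
  have hsurj : Function.Surjective T :=
    (LinearMap.injective_iff_surjective_of_finrank_eq_finrank hfin).1 hinj
  obtain ⟨f, hf⟩ := hsurj (fun r => if (r : ℕ) = p then 1 else 0)
  exact ⟨f, hdeg f, fun r hr => congrFun hf ⟨r, by omega⟩⟩

lemma aux_two {K σ : Type*} [Field K] [CharZero K] (i j : σ) (a b p q : ℕ) :
    ∃ (F : MvPolynomial σ K) (c : ℕ → K), F.IsHomogeneous (p + q) ∧
      (X i + X j) ^ (a + b) * F =
        ∑ kl ∈ Finset.HasAntidiagonal.antidiagonal (a + b + (p + q)), C (c kl.1) * (X i ^ kl.1 * X j ^ kl.2) ∧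
      ∀ r ≤ p + q, c (a + r) = if r = p then 1 else 0 := by
  obtain ⟨f, hf, hc⟩ := aux_surj (K := K) a b (p + q) p
  have hX : (Polynomial.X + 1 : Polynomial K).natDegree = 1 := by
    simpa using Polynomial.natDegree_X_add_C (1 : K)
  refine ⟨aeval ![X i, X j] (f.homogenize (p + q)),
    fun u => ((Polynomial.X + 1) ^ (a + b) * f : Polynomial K).coeff u, ?_, ?_, hc⟩
  · have := (Polynomial.isHomogeneous_homogenize (n := p + q) f).aeval
      (![X i, X j] : Fin 2 → MvPolynomial σ K) (n := 1) ?_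
    · simpa using this
    · intro t
      fin_cases t
      · exact isHomogeneous_X _ _
      · exact isHomogeneous_X _ _
  · have h1 : ((Polynomial.X + 1 : Polynomial K) ^ (a + b)).homogenize (a + b)
        = (X 0 + X 1) ^ (a + b) := by
      apply Polynomial.homogenize_eq_of_isHomogeneous
      · simpa using ((isHomogeneous_X K (0 : Fin 2)).add (isHomogeneous_X K 1)).pow (a + b)
      · simp
    have h2 := Polynomial.homogenize_mul ((Polynomial.X + 1 : Polynomial K) ^ (a + b)) f
      (m := a + b) (n := p + q) (by rw [Polynomial.natDegree_pow, hX, mul_one]) hf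
    have h3 := congrArg (aeval (![X i, X j] : Fin 2 → MvPolynomial σ K)) h2
    rw [h1, map_mul] at h3
    simp only [map_pow, map_add, aeval_X, Matrix.cons_val_zero, Matrix.cons_val_one] at h3
    rw [← h3, Polynomial.homogenize, map_sum]
    refine Finset.sum_congr rfl fun kl _ => ?_
    rw [aeval_monomial, Finsupp.update_eq_add_single (by simp), Finsupp.prod_add_index' (by simp) (by simp [pow_add])]
    simp [algebraMap_eq]

lemma aux_sub {σ : Type*} (t : σ →₀ ℕ) (d : ℕ) (h : d ≤ t.degree) :
    ∃ s ≤ t, s.degree = d := by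
  induction hk : t.degree - d generalizing t with
  | zero => exact ⟨t, le_rfl, by omega⟩
  | succ m ih =>
    have ht : t ≠ 0 := by rintro rfl; simp at hk
    obtain ⟨x, hx⟩ := Finsupp.ne_iff.1 ht
    have hle : Finsupp.single x 1 ≤ t := by
      rw [Finsupp.single_le_iff]; simp at hx; omega
    have hd : (t - Finsupp.single x 1).degree + 1 = t.degree := by
      conv_rhs => rw [← tsub_add_cancel_of_le hle]
      simp
    obtain ⟨s, hs, hsd⟩ := ih (t - Finsupp.single x 1) (by omega) (by omega)
    exact ⟨s, hs.trans tsub_le_self, hsd⟩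

lemma aux_deg {K σ : Type*} [Field K] [CharZero K]
    (I : Ideal (MvPolynomial σ K)) (d : ℕ)
    (i j : σ) (hij : i ≠ j) (a b : ℕ)
    (hdvd : ∀ s : σ →₀ ℕ, s.degree = d → monomial s (1 : K) ∉ I →
      a ≤ s i ∧ b ≤ s j) (s : σ →₀ ℕ) (hs : s.degree = d) (hsI : monomial s (1 : K) ∉ I) :
    a + b ≤ d ∧ ∃ F : MvPolynomial σ K, F.IsHomogeneous (d - (a + b)) ∧
      monomial s 1 - (X i + X j) ^ (a + b) * F ∈ I := by
  obtain ⟨ha, hb⟩ := hdvd s hs hsI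
  obtain ⟨p, hp⟩ := Nat.exists_eq_add_of_le ha
  obtain ⟨q, hq⟩ := Nat.exists_eq_add_of_le hb
  obtain ⟨m, hm⟩ : ∃ m : σ →₀ ℕ, s = Finsupp.single i (a + p) + Finsupp.single j (b + q) + m := by
    apply exists_add_of_le
    intro x
    classical
    simp only [Finsupp.add_apply, Finsupp.single_apply]
    split_ifs with h1 h2 h2
    · exact absurd (h1.trans h2.symm) hij
    · subst h1; omega
    · subst h2; omega
    · omega
  have hdm : a + p + (b + q) + m.degree = d := by
    rw [← hs, hm]; simp
  have hmi : m i = 0 := by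
    have := congrArg (fun g => g i) hm
    simp [hij, hij.symm] at this
    omega
  have hmj : m j = 0 := by
    have := congrArg (fun g => g j) hm
    simp [hij, hij.symm] at this
    omega
  refine ⟨by omega, ?_⟩
  obtain ⟨F, c, hF, hFc, hc⟩ := aux_two (K := K) i j a b p q
  refine ⟨F * monomial m 1, ?_, ?_⟩
  · have := hF.mul (isHomogeneous_monomial (1 : K) (rfl : m.degree = m.degree))
    rwa [show p + q + m.degree = d - (a + b) by omega] at this
  have hmono : ∀ u v : ℕ, (X i ^ u * X j ^ v * monomial m 1 : MvPolynomial σ K) =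
      monomial (Finsupp.single i u + Finsupp.single j v + m) 1 := by
    intro u v
    rw [X_pow_eq_monomial, X_pow_eq_monomial, monomial_mul, monomial_mul]; simp
  have hmem : ((a + p, b + q) : ℕ × ℕ) ∈ Finset.HasAntidiagonal.antidiagonal (a + b + (p + q)) := by
    simp; omega
  rw [← mul_assoc, hFc, ← Finset.add_sum_erase _ _ hmem, hc p (by omega), add_mul]
  simp only [if_true, map_one, one_mul]
  rw [hmono, ← hm, sub_add_cancel_left, neg_mem_iff, Finset.sum_mul]
  refine Ideal.sum_mem _ fun kl hkl => ?_
  rw [mul_assoc, hmono]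
  obtain ⟨u, v⟩ := kl
  simp only [Finset.mem_erase, ne_eq, Prod.mk.injEq, Finset.HasAntidiagonal.mem_antidiagonal] at hkl
  by_cases hI : monomial (Finsupp.single i u + Finsupp.single j v + m) (1 : K) ∈ I
  · exact I.mul_mem_left _ hI
  · have := hdvd _ (by simp; omega) hI
    simp [hij, hij.symm, hmi, hmj] at this
    obtain ⟨r, hr⟩ := Nat.exists_eq_add_of_le this.1
    have h0 : c u = 0 := by
      rw [hr, hc r (by omega), if_neg]
      rintro rfl
      exact hkl.1 ⟨hr, by omega⟩
    simp [h0]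

lemma aux_deg' {K σ : Type*} [Field K] [CharZero K]
    (I : Ideal (MvPolynomial σ K)) (d : ℕ)
    (i j : σ) (hij : i ≠ j) (a b : ℕ)
    (hdvd : ∀ s : σ →₀ ℕ, s.degree = d → monomial s (1 : K) ∉ I →
      a ≤ s i ∧ b ≤ s j) (k : ℕ) (hk : d ≤ k)
    (t : σ →₀ ℕ) (hs : t.degree = k) (htI : monomial t (1 : K) ∉ I) :
    a + b ≤ k ∧ ∃ F : MvPolynomial σ K, F.IsHomogeneous (k - (a + b)) ∧
      monomial t 1 - (X i + X j) ^ (a + b) * F ∈ I := by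
  obtain ⟨s, hst, hsd⟩ := aux_sub t d (by omega)
  obtain ⟨r, rfl⟩ := exists_add_of_le hst
  have hmul : monomial (s + r) (1 : K) = monomial r 1 * monomial s 1 := by
    rw [monomial_mul, add_comm]; simp
  have hdr : d + r.degree = k := by rw [← hs, ← hsd]; simp
  obtain ⟨h1, F, hF, hFI⟩ := aux_deg I d i j hij a b hdvd s hsd (fun h => htI (by
    rw [hmul]; exact I.mul_mem_left _ h))
  refine ⟨by omega, monomial r 1 * F, ?_, ?_⟩
  · have := (isHomogeneous_monomial (1 : K) (rfl : r.degree = r.degree)).mul hF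
    rwa [show r.degree + (d - (a + b)) = k - (a + b) by omega] at this
  · have := I.mul_mem_left (monomial r 1) hFI
    rw [hmul]
    convert this using 1
    ring

/-- Let `I ⊆ K[x_1,…,x_n]` be an artinian monomial ideal generated in the
single degree `d` (`K` of characteristic zero). If there are `i < j` and `a, b ≥ 0` such that
every degree-`d` monomial not in `I` is divisible by `x_i^a x_j^b`, then
`×(x_i+x_j)^{a+b} : (S/I)_{k-a-b} → (S/I)_k` has maximal rank for every integer `k`. -/
theorem mul_by_power_of_xi_plus_xj_has_maximal_rank
    (K : Type*) [Field K] [CharZero K] (n d : ℕ)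
    (I : Ideal (MvPolynomial (Fin n) K))
    (hart : Module.Finite K (MvPolynomial (Fin n) K ⧸ I))
    (hmon : ∃ G : Set (Fin n →₀ ℕ), (∀ s ∈ G, (s.sum fun _ v => v) = d) ∧
      I = Ideal.span ((fun s => monomial s (1 : K)) '' G))
    (i j : Fin n) (hij : i < j) (a b : ℕ)
    (hdvd : ∀ s : Fin n →₀ ℕ, (s.sum fun _ v => v) = d → monomial s (1 : K) ∉ I →
      (X i ^ a * X j ^ b : MvPolynomial (Fin n) K) ∣ monomial s 1) :
    ∀ k : ℤ,
      MaxRankOn (LinearMap.mulLeft K (Ideal.Quotient.mk I ((X i + X j) ^ (a + b))))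
        (gradedPiece I (k - (a + b))) (gradedPiece I k) := by
  have hdeg : ∀ s : Fin n →₀ ℕ, (s.sum fun _ v => v) = s.degree := fun s => rfl
  obtain ⟨G, hG, hIG⟩ := hmon
  have hdvd' : ∀ s : Fin n →₀ ℕ, s.degree = d → monomial s (1 : K) ∉ I →
      a ≤ s i ∧ b ≤ s j := by
    intro s hs hsI
    have h := hdvd s hs hsI
    rw [X_pow_eq_monomial, X_pow_eq_monomial, monomial_mul, one_mul,
      monomial_one_dvd_monomial_one] at h
    have hi := h i
    have hj := h j
    simp [hij.ne, hij.ne'] at hi hj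
    exact ⟨by omega, by omega⟩
  intro k
  by_cases hk : k < d
  · left
    intro x hx hfx
    unfold gradedPiece at hx
    split_ifs at hx with h0
    · obtain ⟨F, hF, rfl⟩ := hx
      have hF' : F.IsHomogeneous (k - (a + b)).toNat := hF
      have hmem : (X i + X j) ^ (a + b) * F ∈ I := by
        rw [← Ideal.Quotient.eq_zero_iff_mem, map_mul]
        exact hfx
      have hL : ((X i + X j : MvPolynomial (Fin n) K)).IsHomogeneous 1 :=
        (isHomogeneous_X K i).add (isHomogeneous_X K j)
      have hhom := (hL.pow (a + b)).mul hF'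
      have hzero : (X i + X j) ^ (a + b) * F = 0 := by
        rw [← support_eq_empty, Finset.eq_empty_iff_forall_notMem]
        intro t ht
        rw [hIG, mem_ideal_span_monomial_image] at hmem
        obtain ⟨s, hs, hst⟩ := hmem t ht
        have h1 := hG s hs
        rw [hdeg] at h1
        have h2 : t.degree = 1 * (a + b) + (k - (a + b)).toNat := by
          rw [Finsupp.degree_eq_weight_one]; exact hhom (mem_support_iff.1 ht)
        have h3 : s.degree ≤ t.degree := Finsupp.degree_mono hst
        omega
      have hL0 : (X i + X j : MvPolynomial (Fin n) K) ≠ 0 := by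
        intro h
        have := congrArg (coeff (Finsupp.single i 1)) h
        simp [coeff_X, Finsupp.single_left_inj, hij.ne'] at this
      rcases mul_eq_zero.1 hzero with h | h
      · exact absurd h (pow_ne_zero _ hL0)
      · simp [h]
    · simpa using hx
  · right
    have hk0 : 0 ≤ k := by omega
    have main : ∀ t : Fin n →₀ ℕ, t.degree = k.toNat →
        Ideal.Quotient.mk I (monomial t (1 : K)) ∈ (gradedPiece I (k - (a + b))).map
          (LinearMap.mulLeft K (Ideal.Quotient.mk I ((X i + X j) ^ (a + b)))) := by
      intro t ht
      by_cases htI : monomial t (1 : K) ∈ I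
      · rw [Ideal.Quotient.eq_zero_iff_mem.2 htI]; exact Submodule.zero_mem _
      · obtain ⟨h1, F, hF, hFI⟩ := aux_deg' I d i j hij.ne a b hdvd' k.toNat (by omega) t ht htI
        refine ⟨Ideal.Quotient.mk I F, ?_, ?_⟩
        · unfold gradedPiece
          rw [if_pos (by omega)]
          refine ⟨F, ?_, rfl⟩
          have : (k - (a + b)).toNat = k.toNat - (a + b) := by omega
          rw [this]
          exact hF
        · rw [LinearMap.mulLeft_apply, ← map_mul]
          exact (Ideal.Quotient.eq.2 hFI).symm
    intro x hx
    unfold gradedPiece at hx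
    rw [if_pos hk0] at hx
    obtain ⟨F, hF, rfl⟩ := hx
    have hF' : F.IsHomogeneous k.toNat := hF
    rw [F.as_sum, map_sum]
    refine Submodule.sum_mem _ fun t ht => ?_
    have h2 : t.degree = k.toNat := by
      rw [Finsupp.degree_eq_weight_one]; exact hF' (mem_support_iff.1 ht)
    have h3 : monomial t (coeff t F) = coeff t F • monomial t (1 : K) := by
      rw [smul_monomial, smul_eq_mul, mul_one]
    rw [h3, map_smul]
    exact Submodule.smul_mem _ _ (main t h2)
end

section
/- Let K be a field of characteristic zero and let I ⊂ S = K[x_1,…,x_n] be an artinian monomial ideal generated in a single degree d such that every monomial of degree d not contained in I is divisible by the product x_1·x_2·⋯·x_n. Then for every pair of integers 1 ≤ i < j ≤ n, the multiplication map ×(x_i+x_j)^2 : (S/I)_{d−2} → (S/I)_d is surjective; equivalently, 𝔪^d ⊆ I + (x_i + x_j)^2, where 𝔪 = (x_1,…,x_n) is the maximal homogeneous ideal. -/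
open MvPolynomial

/-- A sequence which is an arithmetic progression modulo `W` and vanishes at both ends modulo `W`
vanishes modulo `W`. -/
lemma EHU_aux_seq {K M : Type*} [Field K] [CharZero K] [AddCommGroup M] [Module K M]
    (W : Submodule K M) (u : ℕ → M) (m : ℕ) (h0 : u 0 ∈ W) (hm : u m ∈ W)
    (h : ∀ b, b + 2 ≤ m → u b - (2 : K) • u (b + 1) + u (b + 2) ∈ W) :
    ∀ b, b ≤ m → u b ∈ W := by
  have key : ∀ b, (b ≤ m → u b - (b : K) • u 1 ∈ W) ∧
      (b + 1 ≤ m → u (b + 1) - ((b + 1 : ℕ) : K) • u 1 ∈ W) := by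
    intro b
    induction b with
    | zero => simp [h0]
    | succ b ih =>
      refine ⟨ih.2, fun hb => ?_⟩
      have h1 := ih.1 (by omega)
      have h2 := ih.2 (by omega)
      have h3 := h b hb
      have := W.add_mem (W.sub_mem h3 h1) (W.smul_mem (2 : K) h2)
      convert this using 1
      push_cast
      module
  rcases Nat.eq_zero_or_pos m with rfl | hpos
  · intro b hb
    obtain rfl : b = 0 := by omega
    exact h0
  have h1 : (m : K) • u 1 ∈ W := by
    have := W.sub_mem hm ((key m).1 le_rfl)
    simpa using this
  have hne : (m : K) ≠ 0 := by exact_mod_cast hpos.ne'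
  have h1' : u 1 ∈ W := (W.smul_mem_iff hne).1 h1
  intro b hb
  have := W.add_mem ((key b).1 hb) (W.smul_mem (b : K) h1')
  simpa using this

lemma EHU_aux_mono (K : Type*) [Field K] [CharZero K] (n d : ℕ)
    (I : Ideal (MvPolynomial (Fin n) K))
    (hdvd : ∀ s : Fin n →₀ ℕ, (s.sum fun _ v => v) = d → monomial s (1 : K) ∉ I →
      (∏ t : Fin n, X t : MvPolynomial (Fin n) K) ∣ monomial s 1)
    (i j : Fin n) (hij : i ≠ j) (s : Fin n →₀ ℕ) (hs : s.degree = d) :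
    Ideal.Quotient.mk I (monomial s (1 : K)) ∈
        (gradedPiece I ((d : ℤ) - 2)).map
          (LinearMap.mulLeft K (Ideal.Quotient.mk I ((X i + X j) ^ 2))) := by
  have hI : ∀ (k : Fin n) (s : Fin n →₀ ℕ), s.degree = d → s k = 0 → monomial s (1 : K) ∈ I := by
    intro k s hs hk
    by_contra hn
    have h1 := (Finset.dvd_prod_of_mem (fun t => (X t : MvPolynomial (Fin n) K))
      (Finset.mem_univ k)).trans (hdvd s hs hn)
    rw [X_dvd_monomial] at h1
    simp [hk] at h1
  set R := (gradedPiece I ((d : ℤ) - 2)).map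
          (LinearMap.mulLeft K (Ideal.Quotient.mk I ((X i + X j) ^ 2))) with hR
  set w : Fin n →₀ ℕ := (s.erase i).erase j with hw
  have hwi : w i = 0 := by simp [hw, Finsupp.erase_ne hij]
  have hwj : w j = 0 := by simp [hw]
  have hsw : s = w + Finsupp.single i (s i) + Finsupp.single j (s j) := by
    ext t
    by_cases h1 : t = j
    · subst h1; simp [hwj, hij]
    · by_cases h2 : t = i
      · subst h2; simp [hwi, hij.symm]
      · simp [hw, Finsupp.erase_ne h1, Finsupp.erase_ne h2, Ne.symm h1, Ne.symm h2]
  have hdeg : w.degree + (s i + s j) = d := by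
    rw [← hs]
    conv_rhs => rw [hsw]
    simp [add_assoc]
  set m := s i + s j with hm
  let u : ℕ → MvPolynomial (Fin n) K ⧸ I := fun b =>
    Ideal.Quotient.mk I ((-1) ^ b * monomial (w + Finsupp.single i (m - b) + Finsupp.single j b) 1)
  have hu := EHU_aux_seq (K := K) R u m ?_ ?_ ?_ (s j) (by omega)
  · have e : m - s j = s i := by omega
    simp only [u, e, ← hsw] at hu
    rcases neg_one_pow_eq_or (MvPolynomial (Fin n) K) (s j) with h | h
    · simpa [h] using hu
    · simpa [h] using hu
  · have : monomial (w + Finsupp.single i m + Finsupp.single j 0) (1 : K) ∈ I := by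
      apply hI j
      · simp [hdeg]
      · simp [hwj, hij]
    have : u 0 = 0 := by
      simp only [u]
      rw [Ideal.Quotient.eq_zero_iff_mem]
      exact I.mul_mem_left _ this
    rw [this]; exact R.zero_mem
  · have : monomial (w + Finsupp.single i (m - m) + Finsupp.single j m) (1 : K) ∈ I := by
      apply hI i
      · simp [hdeg]
      · simp [hwi, hij.symm]
    have : u m = 0 := by
      simp only [u]
      rw [Ideal.Quotient.eq_zero_iff_mem]
      exact I.mul_mem_left _ this
    rw [this]; exact R.zero_mem
  · intro b hb
    obtain ⟨c, hc⟩ := Nat.exists_eq_add_of_le hb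
    refine ⟨Ideal.Quotient.mk I
      ((-1) ^ b * monomial (w + Finsupp.single i c + Finsupp.single j b) 1), ?_, ?_⟩
    · have h0 : (0 : ℤ) ≤ (d : ℤ) - 2 := by omega
      rw [gradedPiece, if_pos h0]
      refine ⟨_, ?_, rfl⟩
      have hh : (monomial (w + Finsupp.single i c + Finsupp.single j b) (1 : K)).IsHomogeneous
          ((d : ℤ) - 2).toNat := by
        apply isHomogeneous_monomial
        simp
        omega
      rcases neg_one_pow_eq_or (MvPolynomial (Fin n) K) b with h | h
      · simpa [h] using hh
      · simpa [h] using hh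
    · have e0 : m - b = c + 2 := by omega
      have e1 : m - (b + 1) = c + 1 := by omega
      have e2 : m - (b + 2) = c := by omega
      have e3 : ∀ p q : ℕ, monomial (w + Finsupp.single i p + Finsupp.single j q) (1 : K) =
          monomial w 1 * X i ^ p * X j ^ q := by
        intro p q
        rw [monomial_add_single, monomial_add_single]
      simp only [u, e0, e1, e2, e3, LinearMap.mulLeft_apply]
      rw [ofNat_smul_eq_nsmul K 2, ← map_nsmul, ← map_sub, ← map_add, ← map_mul]
      congr 1
      rw [nsmul_eq_mul]
      push_cast
      ring

/-- Let `I ⊆ K[x_1,…,x_n]` be an artinian monomial ideal generated in the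
single degree `d` (`K` of characteristic zero) such that every degree-`d` monomial not in `I`
is divisible by `x_1 x_2 ⋯ x_n`. Then for every pair `i < j` the multiplication map
`×(x_i+x_j)^2 : (S/I)_{d-2} → (S/I)_d` is surjective; equivalently
`𝔪^d ⊆ I + (x_i + x_j)^2` where `𝔪 = (x_1,…,x_n)`. -/
theorem EHU_conjecture_for_monomial_ideals_with_full_support_socle
    (K : Type*) [Field K] [CharZero K] (n d : ℕ)
    (I : Ideal (MvPolynomial (Fin n) K))
    (hart : Module.Finite K (MvPolynomial (Fin n) K ⧸ I))
    (hmon : ∃ G : Set (Fin n →₀ ℕ), (∀ s ∈ G, (s.sum fun _ v => v) = d) ∧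
      I = Ideal.span ((fun s => monomial s (1 : K)) '' G))
    (hdvd : ∀ s : Fin n →₀ ℕ, (s.sum fun _ v => v) = d → monomial s (1 : K) ∉ I →
      (∏ t : Fin n, X t : MvPolynomial (Fin n) K) ∣ monomial s 1) :
    ∀ i j : Fin n, i < j →
      (gradedPiece I (d : ℤ) ≤
        (gradedPiece I ((d : ℤ) - 2)).map
          (LinearMap.mulLeft K (Ideal.Quotient.mk I ((X i + X j) ^ 2)))) ∧
      ((Ideal.span (Set.range (X : Fin n → MvPolynomial (Fin n) K))) ^ d ≤
        I + Ideal.span {((X i + X j) ^ 2 : MvPolynomial (Fin n) K)}) := by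
  intro i j hij
  have key := EHU_aux_mono K n d I hdvd i j hij.ne
  constructor
  · rw [gradedPiece, if_pos (by positivity), Submodule.map_le_iff_le_comap]
    intro p hp
    have hp' : p.IsHomogeneous d := hp
    rw [p.as_sum]
    refine Submodule.sum_mem _ fun s hs => ?_
    have h1 : s.degree = d := by
      have := hp'.degree_eq_sum_deg_support hs
      rw [this]; rfl
    have h2 : monomial s (coeff s p) = coeff s p • monomial s (1 : K) := by
      simp [smul_monomial]
    rw [h2]
    exact Submodule.smul_mem _ _ (key s h1)
  · have := pow_idealOfVars_eq_span (σ := Fin n) (R := K) d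
    rw [idealOfVars] at this
    rw [this, Ideal.span_le]
    rintro _ ⟨s, hs, rfl⟩
    obtain ⟨q, -, hq⟩ := key s hs
    obtain ⟨q, rfl⟩ := Ideal.Quotient.mk_surjective q
    rw [LinearMap.mulLeft_apply, ← map_mul, eq_comm, Ideal.Quotient.eq] at hq
    have := Submodule.add_mem_sup hq
      (Ideal.mul_mem_right q _ (Ideal.mem_span_singleton_self ((X i + X j) ^ 2)))
    simpa using this
end

section
/- Let K be a field of characteristic zero and let F = Σ_m a_m·m be a homogeneous polynomial of degree d in R = K[y_1,…,y_n] such that (∂/∂y_1 + ∂/∂y_2 + ⋯ + ∂/∂y_n)(F) = 0. If m is a monomial with a_m ≠ 0 and y_i divides m, then for every integer j with 0 ≤ j < deg_i(m) there exists a monomial m_{i,j} of degree d with deg_i(m_{i,j}) = j and a_{m_{i,j}} ≠ 0 (i.e., m_{i,j} lies in the support of F). -/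
open MvPolynomial

theorem aux_coeff_pderiv {K : Type*} [Field K] {n : ℕ} (l : Fin n)
    (F : MvPolynomial (Fin n) K) (s : Fin n →₀ ℕ) :
    coeff s (pderiv l F) = coeff (s + Finsupp.single l 1) F * ((s l : K) + 1) := by
  classical
  induction F using MvPolynomial.induction_on' with
  | monomial u a =>
    rw [pderiv_monomial, coeff_monomial, coeff_monomial]
    by_cases h : u = s + Finsupp.single l 1
    · subst h
      simp
    · rw [if_neg h, zero_mul]
      split_ifs with h2
      · by_cases hu : u l = 0
        · simp [hu]
        · exfalso
          apply h
          rw [← h2]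
          ext k
          by_cases hk : l = k
          · subst hk
            simp
            omega
          · simp [Finsupp.single_apply, hk]
      · rfl
  | add p q hp hq => simp [hp, hq, add_mul]

theorem aux_step {K : Type*} [Field K] [CharZero K] {n : ℕ}
    (F : MvPolynomial (Fin n) K)
    (hder : (∑ i : Fin n, pderiv i F) = 0) (i : Fin n) (k : ℕ)
    (h : ∃ m : Fin n →₀ ℕ, m i = k + 1 ∧ coeff m F ≠ 0) :
    ∃ m : Fin n →₀ ℕ, m i = k ∧ coeff m F ≠ 0 := by
  classical
  obtain ⟨m, hmi, hm⟩ := h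
  by_contra! hc
  obtain ⟨s, rfl⟩ : ∃ s, m = s + Finsupp.single i 1 := by
    refine ⟨m - Finsupp.single i 1, ?_⟩
    ext k
    by_cases hk : i = k
    · subst hk
      simp
      omega
    · simp [Finsupp.single_apply, hk]
  have hs : s i = k := by simpa using hmi
  have h0 := congrArg (coeff s) hder
  rw [coeff_sum, coeff_zero, Finset.sum_eq_single i] at h0
  · rw [aux_coeff_pderiv] at h0
    exact (mul_ne_zero hm (Nat.cast_add_one_ne_zero _)) h0
  · intro l _ hl
    rw [aux_coeff_pderiv, hc _ (by simp [Finsupp.single_apply, hl, hs]), zero_mul]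
  · simp

theorem support_of_kernel_of_sum_of_derivatives
    (K : Type*) [Field K] [CharZero K] (n d : ℕ)
    (F : MvPolynomial (Fin n) K) (hF : F.IsHomogeneous d)
    (hder : (∑ i : Fin n, pderiv i F) = 0)
    (m : Fin n →₀ ℕ) (hm : coeff m F ≠ 0) (i : Fin n) (hi : 1 ≤ m i) :
    ∀ j : ℕ, j < m i → ∃ m' : Fin n →₀ ℕ,
      (m'.sum fun _ v => v) = d ∧ m' i = j ∧ coeff m' F ≠ 0 := by
  intro j hj
  obtain ⟨m', h1, h2⟩ : ∃ m' : Fin n →₀ ℕ, m' i = j ∧ coeff m' F ≠ 0 :=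
    Nat.decreasingInduction (motive := fun j _ => ∃ m' : Fin n →₀ ℕ, m' i = j ∧ coeff m' F ≠ 0)
      (fun k _ h => aux_step F hder i k h) ⟨m, rfl, hm⟩ hj.le
  refine ⟨m', ?_, h1, h2⟩
  have := hF h2
  rw [Finsupp.weight_apply] at this
  simpa using this
end

section
/- Let K be a field of characteristic zero. If F is a nonzero homogeneous polynomial of degree d in K[y_1,…,y_n] satisfying (∂/∂y_1 + ∂/∂y_2 + ⋯ + ∂/∂y_n)(F) = 0, then F has at least d+1 distinct monomials in its support. -/
open MvPolynomial

lemma aux_pderiv_comm {K : Type*} [Field K] {n : ℕ} (i j : Fin n) (F : MvPolynomial (Fin n) K) :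
    pderiv i (pderiv j F) = pderiv j (pderiv i F) := by
  ext m
  by_cases h : i = j
  · rw [h]
  · have h' : j ≠ i := fun e => h e.symm
    simp only [coeff_pderiv, Finsupp.add_apply, Finsupp.single_eq_of_ne h,
      Finsupp.single_eq_of_ne h', add_zero]
    rw [add_right_comm]
    ring

/-- An element of the kernel has, for each variable, a monomial free of that variable. -/
lemma aux_exists_free {K : Type*} [Field K] [CharZero K] {n : ℕ}
    (F : MvPolynomial (Fin n) K) (hF0 : F ≠ 0)
    (hder : (∑ i : Fin n, pderiv i F) = 0) (i : Fin n) :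
    ∃ m ∈ F.support, m i = 0 := by
  obtain ⟨m, hm, hmin⟩ := Finset.exists_min_image F.support (fun m => m i)
    (by rwa [Finset.nonempty_iff_ne_empty, Ne, MvPolynomial.support_eq_empty])
  refine ⟨m, hm, ?_⟩
  by_contra hk
  have hle : Finsupp.single i 1 ≤ m := by
    rw [Finsupp.single_le_iff]; omega
  obtain ⟨u, rfl⟩ : ∃ u, m = u + Finsupp.single i 1 := ⟨m - Finsupp.single i 1, by
    rw [tsub_add_cancel_of_le hle]⟩
  have h := congrArg (coeff u) hder
  rw [coeff_sum, Finset.sum_eq_single i] at h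
  · rw [coeff_pderiv, coeff_zero] at h
    rcases mul_eq_zero.1 h with h | h
    · exact (mem_support_iff.1 hm) h
    · exact (Nat.cast_add_one_ne_zero (R := K) (u i)) h
  · intro j _ hj
    rw [coeff_pderiv]
    have : coeff (u + Finsupp.single j 1) F = 0 := by
      by_contra hc
      have := hmin _ (mem_support_iff.2 hc)
      simp [Finsupp.single_eq_of_ne hj.symm] at this
    rw [this, zero_mul]
  · simp

/-- If `F` is a nonzero homogeneous polynomial of degree `d` in
`K[y_1,…,y_n]` (`K` of characteristic zero) satisfying
`(∂/∂y_1 + ⋯ + ∂/∂y_n)(F) = 0`, then `F` has at least `d + 1` monomials in its support. -/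
theorem kernel_of_sum_of_derivatives_has_large_support
    (K : Type*) [Field K] [CharZero K] (n d : ℕ)
    (F : MvPolynomial (Fin n) K) (hF0 : F ≠ 0) (hF : F.IsHomogeneous d)
    (hder : (∑ i : Fin n, pderiv i F) = 0) :
    d + 1 ≤ F.support.card := by
  induction d generalizing F with
  | zero =>
    rw [zero_add, Nat.one_le_iff_ne_zero, Ne, Finset.card_eq_zero, MvPolynomial.support_eq_empty]
    exact hF0
  | succ d ih =>
    obtain ⟨m, hm⟩ := MvPolynomial.ne_zero_iff.1 hF0
    obtain ⟨i, hi⟩ : ∃ i, m i ≠ 0 := by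
      by_contra! hall
      have h0 : m = 0 := Finsupp.ext hall
      have := hF hm
      simp [h0] at this
    have hle : Finsupp.single i 1 ≤ m := by
      rw [Finsupp.single_le_iff]; omega
    obtain ⟨u, rfl⟩ : ∃ u, m = u + Finsupp.single i 1 := ⟨m - Finsupp.single i 1, by
      rw [tsub_add_cancel_of_le hle]⟩
    have hG0 : pderiv i F ≠ 0 := by
      rw [MvPolynomial.ne_zero_iff]
      refine ⟨u, ?_⟩
      rw [coeff_pderiv]
      exact mul_ne_zero hm (by exact_mod_cast Nat.cast_add_one_ne_zero (R := K) (u i))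
    have hG := ih (pderiv i F) hG0 (by simpa using hF.pderiv (i := i)) (by
      have := congrArg (pderiv i) hder
      rw [map_sum, map_zero] at this
      rw [← this]
      exact Finset.sum_congr rfl fun j _ => aux_pderiv_comm j i F)
    obtain ⟨w, hw, hwi⟩ := aux_exists_free F hF0 hder i
    have hc : (pderiv i F).support.card ≤ (F.support.erase w).card := by
      refine Finset.card_le_card_of_injOn (fun v => v + Finsupp.single i 1) ?_ ?_
      · intro v hv
        have hv' := mem_support_iff.1 (Finset.mem_coe.1 hv)
        rw [coeff_pderiv] at hv'
        refine Finset.mem_coe.2 (Finset.mem_erase.2 ⟨?_, mem_support_iff.2 (left_ne_zero_of_mul hv')⟩)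
        intro e
        have := DFunLike.congr_fun e i
        simp [hwi] at this
      · intro a _ b _ h
        exact add_right_cancel h
    have := Finset.card_erase_add_one hw
    omega
end

section
/- Let K be a field of characteristic zero and let I ⊂ S = K[x_1,…,x_n] be an artinian monomial ideal generated in a single degree d. If the Hilbert function satisfies H_{S/I}(d) ≤ d, then S/I has the weak Lefschetz property. Equivalently (contrapositive form): if the multiplication map ×ℓ : (S/I)_{d−1} → (S/I)_d fails to be surjective for every linear form ℓ, then H_{S/I}(d) ≥ d + 1. -/
open MvPolynomial

open MvPolynomial

theorem aux_supp {K : Type*} [Field K] {n : ℕ} (d : ℕ) :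
    ∀ (c : (Fin n →₀ ℕ) → K) (T : Finset (Fin n →₀ ℕ)),
      (∀ m, c m ≠ 0 → m ∈ T) → (∀ m, c m ≠ 0 → m.degree = d) →
      (∀ m, ∑ i, c (m + Finsupp.single i 1) = 0) → (∃ m, c m ≠ 0) → d + 1 ≤ T.card := by
  classical
  induction d with
  | zero =>
    rintro c T hT - - ⟨m, hm⟩
    have := Finset.card_pos.2 ⟨m, hT m hm⟩
    omega
  | succ d ih =>
    rintro c T hT hd hc ⟨m, hm⟩
    have hm0 : m ≠ 0 := by
      rintro rfl
      have := hd 0 hm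
      simp at this
    obtain ⟨i, hi⟩ : ∃ i, m i ≠ 0 := by
      by_contra! h
      exact hm0 (Finsupp.ext h)
    have hsub : ∀ p : Fin n →₀ ℕ, p i ≠ 0 → p - Finsupp.single i 1 + Finsupp.single i 1 = p := by
      intro p hp
      apply tsub_add_cancel_of_le
      rw [Finsupp.single_le_iff]
      omega
    -- an element of the support with `i`-coordinate zero
    have hz : ∀ k : ℕ, ∀ p, c p ≠ 0 → p i = k → ∃ q, c q ≠ 0 ∧ q i = 0 := by
      intro k
      induction k with
      | zero => intro p hp h; exact ⟨p, hp, h⟩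
      | succ k ihk =>
        intro p hp h
        have hs := hsub p (by omega)
        set r := p - Finsupp.single i 1 with hr
        have hri : r i = k := by
          have := congrArg (fun f => f i) hs
          simp at this
          omega
        by_contra hno
        have hall : ∀ j, j ≠ i → c (r + Finsupp.single j 1) = 0 := by
          intro j hj
          by_contra hne
          refine hno (ihk _ hne ?_)
          simp [hri, Finsupp.single_apply, hj]
        have h1 := hc r
        rw [Finset.sum_eq_single i (fun j _ hj => hall j hj) (by simp), hs] at h1
        exact hp h1
    obtain ⟨q, hq, hqi⟩ := hz _ m hm rfl
    let T' := (T.filter (fun p => p i ≠ 0)).image (fun p => p - Finsupp.single i 1)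
    have h1 : d + 1 ≤ T'.card := by
      apply ih (fun p => c (p + Finsupp.single i 1)) T'
      · intro p hp
        refine Finset.mem_image.2 ⟨p + Finsupp.single i 1, ?_, by simp⟩
        simp [hT _ hp]
      · intro p hp
        have := hd _ hp
        simp at this
        exact this
      · intro p
        rw [← hc (p + Finsupp.single i 1)]
        refine Finset.sum_congr rfl fun j _ => ?_
        congr 1
        abel
      · exact ⟨m - Finsupp.single i 1, by simpa only [hsub m hi] using hm⟩
    have h2 : T'.card ≤ (T.filter (fun p => p i ≠ 0)).card := Finset.card_image_le
    have h3 : (T.filter (fun p => p i ≠ 0)).card < T.card := by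
      apply Finset.card_lt_card
      refine ⟨Finset.filter_subset _ _, fun h => ?_⟩
      have := h (hT q hq)
      simp [hqi] at this
    omega

theorem gradedPiece_nat {K : Type*} [Field K] {n : ℕ}
    (I : Ideal (MvPolynomial (Fin n) K)) (j : ℕ) (x : MvPolynomial (Fin n) K ⧸ I) :
    x ∈ gradedPiece I (j : ℤ) ↔ ∃ p : MvPolynomial (Fin n) K, p.IsHomogeneous j ∧
      Ideal.Quotient.mk I p = x := by
  simp [gradedPiece, Submodule.mem_map, mem_homogeneousSubmodule]

theorem aux_card {K : Type*} [Field K] {n d : ℕ} (G : Set (Fin n →₀ ℕ))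
    (I : Ideal (MvPolynomial (Fin n) K))
    (hI : I = Ideal.span ((fun s => monomial s (1 : K)) '' G))
    (hart : Module.Finite K (MvPolynomial (Fin n) K ⧸ I))
    (T : Finset (Fin n →₀ ℕ)) (hT : ∀ m ∈ T, m.degree = d ∧ monomial m (1 : K) ∉ I) :
    T.card ≤ Module.finrank K ↥(gradedPiece I (d : ℤ)) := by
  classical
  let v : T → gradedPiece I (d : ℤ) := fun m =>
    ⟨Ideal.Quotient.mk I (monomial m.1 1), (gradedPiece_nat I d _).2
      ⟨_, isHomogeneous_monomial _ (hT m.1 m.2).1, rfl⟩⟩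
  have hv : LinearIndependent K v := by
    apply LinearIndependent.of_comp (gradedPiece I (d : ℤ)).subtype
    rw [Fintype.linearIndependent_iff]
    intro g hg m
    by_contra hne
    have h1 : (∑ m : T, monomial m.1 (g m) : MvPolynomial (Fin n) K) ∈ I := by
      rw [← Ideal.Quotient.eq_zero_iff_mem, map_sum, ← hg]
      refine Finset.sum_congr rfl fun a _ => ?_
      have : (monomial a.1 (g a) : MvPolynomial (Fin n) K) = g a • monomial a.1 1 := by
        simp [smul_monomial]
      rw [this]
      rfl
    apply (hT m.1 m.2).2
    rw [hI, mem_ideal_span_monomial_image] at h1 ⊢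
    have h2 : m.1 ∈ (∑ m : T, monomial m.1 (g m) : MvPolynomial (Fin n) K).support := by
      rw [mem_support_iff, coeff_sum, Finset.sum_eq_single m]
      · simpa using hne
      · intro b _ hb
        rw [coeff_monomial, if_neg]
        exact fun h => hb (Subtype.ext h)
      · simp
    intro xi hxi
    have : xi = m.1 := by
      have := support_monomial_subset hxi
      simpa using this
    rw [this]
    exact h1 _ h2
  simpa using hv.fintype_card_le_finrank

theorem aux_surj_s11 {K : Type*} [Field K] {n d : ℕ} (G : Set (Fin n →₀ ℕ))
    (I : Ideal (MvPolynomial (Fin n) K))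
    (hI : I = Ideal.span ((fun s => monomial s (1 : K)) '' G))
    (hart : Module.Finite K (MvPolynomial (Fin n) K ⧸ I))
    (hH : Module.finrank K ↥(gradedPiece I ((d + 1 : ℕ) : ℤ)) ≤ d + 1)
    (t : Fin n →₀ ℕ) (ht : t.degree = d + 1) :
    ∃ p : MvPolynomial (Fin n) K, p.IsHomogeneous d ∧
      Ideal.Quotient.mk I ((∑ i, X i) * p) = Ideal.Quotient.mk I (monomial t 1) := by
  classical
  let W := (gradedPiece I (d : ℤ)).map (LinearMap.mulLeft K (Ideal.Quotient.mk I (∑ i, X i)))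
  by_cases hW : Ideal.Quotient.mk I (monomial t 1) ∈ W
  · obtain ⟨x, hx, hx2⟩ := hW
    obtain ⟨p, hp, rfl⟩ := (gradedPiece_nat I d x).1 hx
    exact ⟨p, hp, by rw [← hx2, map_mul]; rfl⟩
  exfalso
  obtain ⟨φ, hφ, hφW⟩ := Submodule.exists_le_ker_of_notMem hW
  let c : (Fin n →₀ ℕ) → K := fun m =>
    if m.degree = d + 1 then φ (Ideal.Quotient.mk I (monomial m 1)) else 0
  have hcd : ∀ m, c m ≠ 0 → m.degree = d + 1 := by
    intro m hm
    by_contra h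
    exact hm (if_neg h)
  have hcI : ∀ m, c m ≠ 0 → monomial m (1 : K) ∉ I := by
    intro m hm h
    apply hm
    simp only [c, if_pos (hcd m hm)]
    rw [Ideal.Quotient.eq_zero_iff_mem.2 h, map_zero]
  have hfin : {m | c m ≠ 0}.Finite :=
    (Finsupp.finite_of_degree_eq (σ := Fin n) (d + 1)).subset hcd
  have h1 := aux_supp (d + 1) c hfin.toFinset (by simp) hcd ?_ ⟨t, by simpa [c, ht] using hφ⟩
  · have h2 := aux_card G I hI hart hfin.toFinset (d := d + 1)
      (fun m hm => by
        have hm' : c m ≠ 0 := by simpa using hm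
        exact ⟨hcd m hm', hcI m hm'⟩)
    omega
  · intro m
    by_cases hm : m.degree = d
    · have h3 : Ideal.Quotient.mk I ((∑ i, X i) * monomial m 1) ∈ W := by
        refine ⟨Ideal.Quotient.mk I (monomial m 1), (gradedPiece_nat I d _).2
          ⟨_, isHomogeneous_monomial _ hm, rfl⟩, ?_⟩
        rw [map_mul]; rfl
      have h4 : φ _ = 0 := hφW h3
      rw [← h4, Finset.sum_mul, map_sum, map_sum]
      refine Finset.sum_congr rfl fun i _ => ?_
      simp only [c]
      rw [if_pos (by simp [hm])]
      congr 2
      rw [X, monomial_mul, add_comm, one_mul]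
    · refine Finset.sum_eq_zero fun i _ => ?_
      simp only [c]
      rw [if_neg (by simpa using hm)]

/-- Let `I ⊆ K[x_1,…,x_n]` be an artinian monomial ideal generated in the
single degree `d` (`K` of characteristic zero). If the Hilbert function satisfies
`H_{S/I}(d) ≤ d`, then `S/I` has the weak Lefschetz property. -/
theorem WLP_when_hilbert_function_at_d_is_small
    (K : Type*) [Field K] [CharZero K] (n d : ℕ)
    (I : Ideal (MvPolynomial (Fin n) K))
    (hart : Module.Finite K (MvPolynomial (Fin n) K ⧸ I))
    (hmon : ∃ G : Set (Fin n →₀ ℕ), (∀ s ∈ G, (s.sum fun _ v => v) = d) ∧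
      I = Ideal.span ((fun s => monomial s (1 : K)) '' G))
    (hH : Module.finrank K ↥(gradedPiece I (d : ℤ)) ≤ d) :
    ∃ ℓ : MvPolynomial (Fin n) K, ℓ.IsHomogeneous 1 ∧
      ∀ j : ℤ, MaxRankOn (LinearMap.mulLeft K (Ideal.Quotient.mk I ℓ))
        (gradedPiece I j) (gradedPiece I (j + 1)) := by
  classical
  obtain ⟨G, hG, hI⟩ := hmon
  have hℓ : (∑ i, X i : MvPolynomial (Fin n) K).IsHomogeneous 1 :=
    IsHomogeneous.sum _ _ _ fun i _ => isHomogeneous_X _ i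
  refine ⟨∑ i, X i, hℓ, fun j => ?_⟩
  by_cases hj : 0 ≤ j
  swap
  · left
    intro x hx _
    simpa [gradedPiece, hj] using hx
  obtain ⟨j, rfl⟩ := Int.eq_ofNat_of_zero_le hj
  -- reduce surjectivity to monomials
  have hred : (∀ s : Fin n →₀ ℕ, s.degree = j + 1 → ∃ p : MvPolynomial (Fin n) K,
      p.IsHomogeneous j ∧
      Ideal.Quotient.mk I ((∑ i, X i) * p) = Ideal.Quotient.mk I (monomial s 1)) →
      MaxRankOn (LinearMap.mulLeft K (Ideal.Quotient.mk I (∑ i, X i)))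
        (gradedPiece I (j : ℤ)) (gradedPiece I ((j : ℤ) + 1)) := by
    intro h
    right
    intro x hx
    obtain ⟨q, hq, rfl⟩ := (gradedPiece_nat I (j + 1) x).1 (by exact_mod_cast hx)
    have hqs : Ideal.Quotient.mk I q = ∑ s ∈ q.support, Ideal.Quotient.mk I (monomial s (coeff s q)) := by
      conv_lhs => rw [q.as_sum]
      exact map_sum (Ideal.Quotient.mk I) _ _
    rw [hqs]
    refine Submodule.sum_mem _ fun s hs => ?_
    have hs' : s.degree = j + 1 := by
      rw [Finsupp.degree_eq_weight_one]
      exact hq (mem_support_iff.1 hs)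
    obtain ⟨p, hp, hp2⟩ := h s hs'
    have h3 : Ideal.Quotient.mk I (monomial s (coeff s q)) =
        coeff s q • Ideal.Quotient.mk I (monomial s 1) := by
      have : (monomial s (coeff s q) : MvPolynomial (Fin n) K) = coeff s q • monomial s 1 := by
        simp [smul_monomial]
      rw [this]
      rfl
    rw [h3]
    refine Submodule.smul_mem _ _ ⟨_, (gradedPiece_nat I j _).2 ⟨p, hp, rfl⟩, ?_⟩
    rw [← hp2, map_mul]
    rfl
  by_cases hjd : j + 1 < d
  · by_cases hn : n = 0
    · apply hred
      intro s hs
      subst hn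
      have : s = 0 := Subsingleton.elim _ _
      simp [this] at hs
    · left
      intro x hx hx0
      obtain ⟨p, hp, rfl⟩ := (gradedPiece_nat I j x).1 hx
      have h1 : (∑ i, X i) * p ∈ I := by
        rw [← Ideal.Quotient.eq_zero_iff_mem, map_mul]
        exact hx0
      have h2 : (∑ i, X i) * p = 0 := by
        by_contra hne
        obtain ⟨s, hs⟩ := (support_nonempty).2 hne
        rw [hI, mem_ideal_span_monomial_image] at h1
        obtain ⟨g, hg, hgs⟩ := h1 s hs
        have h3 : g.degree = d := hG g hg
        have h4 := Finsupp.degree_mono hgs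
        have h5 : s.degree = 1 + j := by
          rw [Finsupp.degree_eq_weight_one]
          exact (hℓ.mul hp) (mem_support_iff.1 hs)
        omega
      rcases mul_eq_zero.1 h2 with h | h
      · exfalso
        have := congrArg (coeff (Finsupp.single (⟨0, by omega⟩ : Fin n) 1)) h
        simp [coeff_sum, coeff_X', Finsupp.single_left_inj] at this
      · rw [h, map_zero]
  · apply hred
    intro s hs
    obtain ⟨t, hts, ht⟩ := Finsupp.exists_le_degree_eq s d (by omega)
    obtain ⟨u, rfl⟩ := exists_add_of_le hts
    rcases d with _ | d
    · have h1 : monomial t (1 : K) ∈ I := by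
        by_contra hno
        have := aux_card (d := 0) G I hI hart {t} (by simpa using ⟨by simpa using ht, hno⟩)
        simp only [Finset.card_singleton] at this
        omega
      refine ⟨0, isHomogeneous_zero _ _ _, ?_⟩
      rw [mul_zero, map_zero, eq_comm, Ideal.Quotient.eq_zero_iff_mem]
      have : (monomial (t + u) (1 : K)) = monomial u 1 * monomial t 1 := by
        rw [monomial_mul, add_comm, one_mul]
      rw [this]
      exact I.mul_mem_left _ h1
    · obtain ⟨p, hp, hp2⟩ := aux_surj_s11 G I hI hart hH t ht
      refine ⟨p * monomial u 1, ?_, ?_⟩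
      · have h6 := hp.mul (isHomogeneous_monomial (1 : K) (d := u) rfl)
        have : d + u.degree = j := by
          rw [map_add, ht] at hs
          omega
        rwa [this] at h6
      · rw [← mul_assoc, map_mul, hp2, ← map_mul, monomial_mul, one_mul]
end

section
/- Let K be a field and let I ⊂ S = K[x_1,…,x_n] be a monomial ideal generated in a single degree d such that 𝔪^{d+1} ⊆ I, where 𝔪 = (x_1,…,x_n). Then there is no monomial m of degree d and index k with: m ∉ I, x_k does not divide m, and for every index i with x_i dividing m the monomial (x_k·m)/x_i does not belong to I. (Indeed, such an m would force the degree-(d+1) monomial x_k·m to lie outside I, contradicting 𝔪^{d+1} ⊆ I.) -/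
open MvPolynomial

/-- Let `I ⊆ K[x_1,…,x_n]` be a monomial ideal generated in the single
degree `d` with `𝔪^{d+1} ⊆ I`, where `𝔪 = (x_1,…,x_n)`. Then there is no degree-`d`
monomial `m` (given by its exponent vector `s`) and index `k` such that `m ∉ I`,
`x_k ∤ m`, and `(x_k·m)/x_i ∉ I` for every `i` with `x_i ∣ m`. -/
theorem no_socle_monomial_missing_a_variable
    (K : Type*) [Field K] (n d : ℕ)
    (I : Ideal (MvPolynomial (Fin n) K))
    (hmon : ∃ G : Set (Fin n →₀ ℕ), (∀ s ∈ G, (s.sum fun _ v => v) = d) ∧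
      I = Ideal.span ((fun s => monomial s (1 : K)) '' G))
    (hreg : (Ideal.span (Set.range (X : Fin n → MvPolynomial (Fin n) K))) ^ (d + 1) ≤ I) :
    ¬ ∃ (s : Fin n →₀ ℕ) (k : Fin n),
      (s.sum fun _ v => v) = d ∧
      monomial s (1 : K) ∉ I ∧
      s k = 0 ∧
      (∀ i : Fin n, 1 ≤ s i →
        monomial (s + Finsupp.single k 1 - Finsupp.single i 1) (1 : K) ∉ I) := by
  rintro ⟨s, k, hs, hsI, hk, hall⟩
  obtain ⟨G, hG, rfl⟩ := hmon
  have key : ∀ t : Fin n →₀ ℕ, monomial t (1 : K) ∈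
      (Ideal.span (Set.range (X : Fin n → MvPolynomial (Fin n) K))) ^ (∑ i, t i) := by
    intro t
    rw [monomial_eq, C_1, one_mul, Finsupp.prod_fintype _ _ (by simp),
      ← Finset.prod_pow_eq_pow_sum]
    exact Ideal.prod_mem_prod fun i _ => Ideal.pow_mem_pow (Ideal.subset_span (Set.mem_range_self i)) _
  have hs' : ∑ i, s i = d := by rw [← hs, Finsupp.sum_fintype _ _ (by simp)]
  have ht : ∑ i, (s + Finsupp.single k 1 : Fin n →₀ ℕ) i = d + 1 := by
    simp [Finset.sum_add_distrib, hs', Finsupp.single_apply]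
  have h1 := key (s + Finsupp.single k 1)
  rw [ht] at h1
  have h2 := hreg h1
  rw [mem_ideal_span_monomial_image] at h2
  obtain ⟨g, hgG, hg⟩ := h2 (s + Finsupp.single k 1) (by simp [mem_support_iff])
  have hgd : ∑ i, g i = d := by rw [← hG g hgG, Finsupp.sum_fintype _ _ (by simp)]
  have hgI : monomial g (1 : K) ∈ Ideal.span ((fun s => monomial s (1 : K)) '' G) :=
    Ideal.subset_span ⟨g, hgG, rfl⟩
  obtain ⟨u, hu⟩ := exists_add_of_le hg
  have hud : ∑ i, u i = 1 := by
    rw [hu] at ht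
    simp only [Finsupp.add_apply, Finset.sum_add_distrib, hgd] at ht
    omega
  obtain ⟨j, hj⟩ : ∃ j, u = Finsupp.single j 1 := by
    obtain ⟨j, -, hj⟩ := Finset.exists_ne_zero_of_sum_ne_zero (hud.trans_ne one_ne_zero)
    have hle : Finsupp.single j 1 ≤ u := by
      rw [Finsupp.single_le_iff]
      omega
    obtain ⟨v, hv⟩ := exists_add_of_le hle
    have hv0 : ∑ i, v i = 0 := by
      rw [hv] at hud
      simpa [Finset.sum_add_distrib, Finsupp.single_apply] using hud
    refine ⟨j, ?_⟩
    have : v = 0 := by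
      ext i
      exact Finset.sum_eq_zero_iff.1 hv0 i (Finset.mem_univ i)
    rw [hv, this, add_zero]
  subst hj
  by_cases hjk : j = k
  · subst hjk
    exact hsI (add_right_cancel hu ▸ hgI)
  · refine hall j ?_ ?_
    · have := DFunLike.congr_fun hu j
      simp [Finsupp.single_apply, Ne.symm hjk] at this
      omega
    · rw [hu, add_tsub_cancel_right]
      exact hgI
end

section
/- Let K be a field and let I ⊂ S = K[x_1,…,x_n] be a monomial ideal generated in a single degree d. Let r ≥ 0 be an integer with r + 1 ≤ d. If every monomial of degree d not contained in I has support of cardinality at least r+1, then the Hilbert function satisfies H_{S/I}(d) ≤ C(n, r+1) · H_{S/I}(d−r−1), where C(n, r+1) is a binomial coefficient. -/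
open MvPolynomial

/-- Let `I ⊆ K[x_1,…,x_n]` be a monomial ideal generated in the single
degree `d`, and let `r ≥ 0` with `r + 1 ≤ d`. If every degree-`d` monomial not in `I` has
support of cardinality at least `r + 1`, then
`H_{S/I}(d) ≤ C(n, r+1) · H_{S/I}(d - r - 1)`. -/
theorem hilbert_function_bound_from_support_condition
    (K : Type*) [Field K] (n d r : ℕ) (hrd : r + 1 ≤ d)
    (I : Ideal (MvPolynomial (Fin n) K))
    (hmon : ∃ G : Set (Fin n →₀ ℕ), (∀ s ∈ G, (s.sum fun _ v => v) = d) ∧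
      I = Ideal.span ((fun s => monomial s (1 : K)) '' G))
    (hsupp : ∀ s : Fin n →₀ ℕ, (s.sum fun _ v => v) = d → monomial s (1 : K) ∉ I →
      r + 1 ≤ s.support.card) :
    Module.finrank K ↥(gradedPiece I (d : ℤ)) ≤
      Nat.choose n (r + 1) * Module.finrank K ↥(gradedPiece I ((d : ℤ) - r - 1)) := by
  obtain ⟨m, rfl⟩ : ∃ m, d = m + (r + 1) := ⟨d - (r + 1), by omega⟩
  have hA : gradedPiece I (((m + (r + 1) : ℕ) : ℤ) - r - 1) =
      (homogeneousSubmodule (Fin n) K m).map (Ideal.Quotient.mkₐ K I).toLinearMap := by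
    have : (((m + (r + 1) : ℕ) : ℤ) - r - 1) = (m : ℤ) := by push_cast; ring
    rw [this]
    simp [gradedPiece]
  have hB : gradedPiece I ((m + (r + 1) : ℕ) : ℤ) =
      (homogeneousSubmodule (Fin n) K (m + (r + 1))).map
        (Ideal.Quotient.mkₐ K I).toLinearMap := by
    unfold gradedPiece
    rw [if_pos (by positivity), Int.toNat_natCast]
  rw [hA, hB]
  set A := (homogeneousSubmodule (Fin n) K m).map (Ideal.Quotient.mkₐ K I).toLinearMap with hAdef
  have : Module.Finite K A :=
    Module.Finite.iff_fg.mpr ((homogeneousSubmodule_fg (σ := Fin n) (R := K) m).map _)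
  let ι := {T : Finset (Fin n) // T ∈ Finset.powersetCard (r + 1) Finset.univ}
  let e : Finset (Fin n) → (Fin n →₀ ℕ) := fun T => ∑ i ∈ T, Finsupp.single i 1
  let Φ : (ι → A) →ₗ[K] (MvPolynomial (Fin n) K ⧸ I) :=
    ∑ T : ι, (LinearMap.mulLeft K (Ideal.Quotient.mkₐ K I (monomial (e T.1) 1))) ∘ₗ
      A.subtype ∘ₗ LinearMap.proj T
  have hΦ : ∀ (T : ι) (a : A), Φ (Pi.single T a) =
      Ideal.Quotient.mkₐ K I (monomial (e T.1) 1) * (a : MvPolynomial (Fin n) K ⧸ I) := by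
    intro T a
    simp only [Φ, LinearMap.sum_apply, LinearMap.comp_apply, LinearMap.proj_apply,
      Submodule.subtype_apply, LinearMap.mulLeft_apply]
    rw [Finset.sum_eq_single T]
    · simp
    · intro b _ hb
      simp [Pi.single_eq_of_ne hb]
    · simp
  have hle : (homogeneousSubmodule (Fin n) K (m + (r + 1))).map
        (Ideal.Quotient.mkₐ K I).toLinearMap ≤ LinearMap.range Φ := by
    rintro _ ⟨p, hp, rfl⟩
    have hp' : p.IsHomogeneous (m + (r + 1)) := hp
    rw [p.as_sum, map_sum]
    refine Submodule.sum_mem _ fun s hs => ?_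
    have hsd : s.degree = m + (r + 1) := by
      have := hp' (mem_support_iff.mp hs)
      rw [Finsupp.degree_eq_weight_one]; exact this
    by_cases hI : monomial s (1 : K) ∈ I
    · have : monomial s (coeff s p) ∈ I := by
        have h2 := I.mul_mem_left (C (coeff s p)) hI
        rwa [C_mul_monomial, mul_one] at h2
      have h0 : (Ideal.Quotient.mkₐ K I).toLinearMap (monomial s (coeff s p)) = 0 :=
        Ideal.Quotient.eq_zero_iff_mem.mpr this
      rw [h0]
      exact Submodule.zero_mem _
    · obtain ⟨T, hTs, hTc⟩ := Finset.exists_subset_card_eq (hsupp s hsd hI)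
      have heT : e T ≤ s := by
        intro i
        simp only [e, Finsupp.finsetSum_apply, Finsupp.single_apply]
        rw [Finset.sum_ite_eq']
        split_ifs with h
        · have := Finsupp.mem_support_iff.mp (hTs h)
          omega
        · exact Nat.zero_le _
      have hdeg : (e T).degree = r + 1 := by
        simp [e, map_sum, hTc]
      have hs2 : e T + (s - e T) = s := add_tsub_cancel_of_le heT
      have hdeg2 : (s - e T).degree = m := by
        have := congrArg Finsupp.degree hs2
        rw [map_add, hdeg, hsd] at this
        omega
      refine ⟨Pi.single (⟨T, by simp [Finset.mem_powersetCard, hTc]⟩ : ι)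
        ⟨Ideal.Quotient.mkₐ K I (monomial (s - e T) (coeff s p)),
          ⟨_, isHomogeneous_monomial _ hdeg2, rfl⟩⟩, ?_⟩
      rw [hΦ]
      simp only [← map_mul, monomial_mul, one_mul, hs2]
      rfl
  calc _ ≤ Module.finrank K (LinearMap.range Φ) := Submodule.finrank_mono hle
    _ ≤ Module.finrank K (ι → A) := LinearMap.finrank_range_le Φ
    _ = _ := by
      rw [Module.finrank_pi_fintype]
      simp [ι]
end
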